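/- arXiv:1909.05924 — 2 statements merged into one kernel-verified Lean document; each statement's English description precedes it below -/
import Mathlib

section
/- For every even n ≥ 2 and every m > 1, the n-th symmetrized topological complexity of the m-sphere equals n+1: TC^Σ_n(S^m) = n+1, where S^m is the unit sphere in ℝ^{m+1}. -/
open unitInterval

noncomputable section

/-- The point `j/(n-1)` of the unit interval, for `j : Fin n`.
These are the `n` evaluation points `0, 1/(n-1), …, (n-2)/(n-1), 1`. -/
def evalPt (n : ℕ) (j : Fin n) : unitInterval :=
  ⟨(j : ℝ) / ((n : ℝ) - 1), by
    have hn : 1 ≤ n := j.pos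
    rcases eq_or_lt_of_le hn with h | h
    · have hn1 : n = 1 := h.symm
      subst hn1
      simp [Fin.fin_one_eq_zero j]
    · have h1 : (0 : ℝ) < (n : ℝ) - 1 := by
        have : (1 : ℝ) < (n : ℝ) := by exact_mod_cast h
        linarith
      constructor
      · exact div_nonneg (Nat.cast_nonneg _) h1.le
      · rw [div_le_one h1]
        have hj : (j : ℕ) + 1 ≤ n := j.is_lt
        have : ((j : ℕ) : ℝ) + 1 ≤ (n : ℝ) := by exact_mod_cast hj
        linarith⟩

/-- Coordinate reversal (the involution `β`) on `n`-tuples: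
`β·(x_1,…,x_n) = (x_n,…,x_1)`. -/
def rtuple {X : Type*} {n : ℕ} (x : Fin n → X) : Fin n → X := fun j => x j.rev

/-- Path reversal (the involution `β`) on the free path space `C(I,X)`:
`(β·γ)(t) = γ(1-t)`. -/
def rpath {X : Type*} [TopologicalSpace X] (γ : C(unitInterval, X)) : C(unitInterval, X) :=
  γ.comp ⟨unitInterval.symm, unitInterval.continuous_symm⟩

/-- `X^n` can be covered by `k` open sets, on each of which there is a continuous
section of the evaluation map `e_n : C(I,X) → X^n`,
`γ ↦ (γ(0), γ(1/(n-1)), …, γ(1))`. -/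
def HasPlanners (X : Type*) [TopologicalSpace X] (n k : ℕ) : Prop :=
  ∃ U : Fin k → Set (Fin n → X),
    (∀ i, IsOpen (U i)) ∧ (⋃ i, U i) = Set.univ ∧
    (∀ i, ∃ s : C(U i, C(unitInterval, X)),
      ∀ x : U i, ∀ j : Fin n, s x (evalPt n j) = (x : Fin n → X) j)

/-- The `n`-th (ordinary, higher) topological complexity `TC_n(X)`, as a value in `ℕ∞`. -/
def TCn (X : Type*) [TopologicalSpace X] (n : ℕ) : ℕ∞ :=
  sInf {k : ℕ∞ | ∃ m : ℕ, (m : ℕ∞) = k ∧ HasPlanners X n m}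

/-- `X^n` can be covered by `k` β-invariant open sets, on each of which there is a
continuous β-equivariant section of the evaluation map `e_n : C(I,X) → X^n`
(a bidirectional motion planner). -/
def HasBidirPlanners (X : Type*) [TopologicalSpace X] (n k : ℕ) : Prop :=
  ∃ U : Fin k → Set (Fin n → X),
    (∀ i, IsOpen (U i)) ∧ (⋃ i, U i) = Set.univ ∧
    (∀ i, ∀ x ∈ U i, rtuple x ∈ U i) ∧
    (∀ i, ∃ s : C(U i, C(unitInterval, X)),
      (∀ x : U i, ∀ j : Fin n, s x (evalPt n j) = (x : Fin n → X) j) ∧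
      (∀ x : U i, ∀ hx : rtuple (x : Fin n → X) ∈ U i,
        s ⟨rtuple (x : Fin n → X), hx⟩ = rpath (s x)))

/-- The `n`-th bidirectional topological complexity `TC^β_n(X)`, as a value in `ℕ∞`. -/
def TCbeta (X : Type*) [TopologicalSpace X] (n : ℕ) : ℕ∞ :=
  sInf {k : ℕ∞ | ∃ m : ℕ, (m : ℕ∞) = k ∧ HasBidirPlanners X n m}

/-- The action of a permutation `sg ∈ Σ_n` on `n`-tuples (by permuting coordinates). -/
def permTuple {X : Type*} {n : ℕ} (sg : Equiv.Perm (Fin n)) (x : Fin n → X) : Fin n → X :=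
  fun j => x (sg j)

/-- `X^n` can be covered by `k` `Σ_n`-invariant open sets, on each of which there is a
continuous `Σ_n`-equivariant section of `E_n : X^{J_n} → X^n`,
`(α_1,…,α_n) ↦ (α_1(1),…,α_n(1))`, where `X^{J_n}` is the space of `n`-tuples of paths
with a common initial point. -/
def HasSymPlanners (X : Type*) [TopologicalSpace X] (n k : ℕ) : Prop :=
  ∃ U : Fin k → Set (Fin n → X),
    (∀ i, IsOpen (U i)) ∧ (⋃ i, U i) = Set.univ ∧
    (∀ i, ∀ sg : Equiv.Perm (Fin n), ∀ x ∈ U i, permTuple sg x ∈ U i) ∧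
    (∀ i, ∃ s : C(U i, Fin n → C(unitInterval, X)),
      (∀ x : U i, ∀ j j' : Fin n, s x j 0 = s x j' 0) ∧
      (∀ x : U i, ∀ j : Fin n, s x j 1 = (x : Fin n → X) j) ∧
      (∀ x : U i, ∀ sg : Equiv.Perm (Fin n),
        ∀ hx : permTuple sg (x : Fin n → X) ∈ U i,
        s ⟨permTuple sg (x : Fin n → X), hx⟩ = permTuple sg (s x)))

/-- The `n`-th symmetrized topological complexity `TC^Σ_n(X)`, as a value in `ℕ∞`. -/
def TCsym (X : Type*) [TopologicalSpace X] (n : ℕ) : ℕ∞ :=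
  sInf {k : ℕ∞ | ∃ m : ℕ, (m : ℕ∞) = k ∧ HasSymPlanners X n m}

/-- The unit sphere `S^m ⊂ ℝ^{m+1}`. -/
abbrev Sph (m : ℕ) : Type :=
  Metric.sphere (0 : EuclideanSpace ℝ (Fin (m + 1))) 1

end



section TCSProof

open Finset


namespace TCS

/-- face operator on sequences -/
def face {X : Type*} (k : ℕ) (x : ℕ → X) : ℕ → X := fun i => if i < k then x i else x (i + 1)

/-- shift operator on sequences -/
def shift {X : Type*} (d : ℕ) (x : ℕ → X) : ℕ → X := fun i => x (d + i)

/-- a cochain depending only on the first `a` entries -/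
def Loc {X : Type*} (a : ℕ) (f : (ℕ → X) → ZMod 2) : Prop :=
  ∀ x x' : ℕ → X, (∀ i < a, x i = x' i) → f x = f x'

/-- coboundary of a cochain of size `a` -/
def D {X : Type*} (a : ℕ) (f : (ℕ → X) → ZMod 2) (x : ℕ → X) : ZMod 2 :=
  ∑ k ∈ range (a + 1), f (face k x)

/-- cup product, first factor of degree `d` -/
def cup {X : Type*} (d : ℕ) (f g : (ℕ → X) → ZMod 2) (x : ℕ → X) : ZMod 2 :=
  f x * g (shift d x)

/-- iterated cup product -/
def W {X : Type*} (m : ℕ) (z : ℕ → (ℕ → X) → ZMod 2) (i : ℕ) (x : ℕ → X) : ZMod 2 :=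
  ∏ j ∈ range i, z j (shift (m * j) x)

lemma two_add (a : ZMod 2) : a + a = 0 := CharTwo.add_self_eq_zero a

lemma Loc.mono {X : Type*} {a b : ℕ} {f : (ℕ → X) → ZMod 2} (h : Loc a f) (hab : a ≤ b) :
    Loc b f := fun x x' hx => h x x' fun i hi => hx i (hi.trans_le hab)

lemma Loc.D {X : Type*} {a : ℕ} {f : (ℕ → X) → ZMod 2} (h : Loc a f) : Loc (a + 1) (D a f) := by
  intro x x' hx
  refine sum_congr rfl fun k _ => h _ _ fun i hi => ?_
  simp only [face]
  split_ifs
  · exact hx i (by omega)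
  · exact hx _ (by omega)

lemma Loc.cup {X : Type*} {d b : ℕ} {f g : (ℕ → X) → ZMod 2} (hf : Loc (d + 1) f)
    (hg : Loc b g) (hb : 1 ≤ b) : Loc (d + b) (cup d f g) := by
  intro x x' hx
  unfold TCS.cup
  rw [hf x x' fun i hi => hx i (by omega), hg (shift d x) (shift d x') fun i hi => hx _ (by omega)]

lemma Loc.add {X : Type*} {a : ℕ} {f g : (ℕ → X) → ZMod 2} (hf : Loc a f)
    (hg : Loc a g) : Loc a (fun x => f x + g x) := by
  intro x x' hx
  simp only [hf x x' hx, hg x x' hx]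

lemma leibniz {X : Type*} {d : ℕ} (b : ℕ) {f : (ℕ → X) → ZMod 2} (g : (ℕ → X) → ZMod 2)
    (hf : Loc (d + 1) f) (x : ℕ → X) :
    D (d + b) (cup d f g) x = cup (d + 1) (D (d + 1) f) g x + cup d f (D b g) x := by
  have e1 : ∀ k ∈ range (d + 1), cup d f g (face k x) = f (face k x) * g (shift (d + 1) x) := by
    intro k hk
    rw [mem_range] at hk
    unfold cup
    congr 2
    funext i
    simp only [shift, face]
    rw [if_neg (by omega)]
    congr 1; omega
  have e2 : ∀ k ∈ range b, cup d f g (face (d + 1 + k) x)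
      = f x * g (face (k + 1) (shift d x)) := by
    intro k _
    unfold cup
    congr 1
    · exact hf _ _ fun i hi => by simp only [face]; rw [if_pos (by omega)]
    · congr 1
      funext i
      simp only [shift, face]
      by_cases h : i < k + 1
      · rw [if_pos h, if_pos (by omega)]
      · rw [if_neg h, if_neg (by omega)]; rfl
  have e3 : f (face (d + 1) x) = f x :=
    hf _ _ fun i hi => by simp only [face]; rw [if_pos (by omega)]
  have e4 : face 0 (shift d x) = shift (d + 1) x := by
    funext i; simp only [face, shift]; rw [if_neg (by omega)]; congr 1; omega
  unfold D
  rw [show d + b + 1 = (d + 1) + b by omega, sum_range_add, sum_congr rfl e1, sum_congr rfl e2]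
  unfold cup
  dsimp only
  rw [sum_range_succ (n := d + 1), sum_range_succ' (n := b), e3, e4, add_mul, mul_add,
    sum_mul, mul_sum]
  have := two_add (f x * g (shift (d + 1) x))
  linear_combination -this

lemma face_face {X : Type*} {l k : ℕ} (h : k ≤ l) (x : ℕ → X) :
    face l (face k x) = face k (face (l + 1) x) := by
  funext i
  simp only [face]
  split_ifs <;> first | rfl | omega

lemma DD {X : Type*} (a : ℕ) (f : (ℕ → X) → ZMod 2) (x : ℕ → X) : D (a + 1) (D a f) x = 0 := by
  unfold D
  rw [← sum_product']
  refine sum_involution (fun p _ => if p.1 ≤ p.2 then (p.2 + 1, p.1) else (p.2, p.1 - 1)) ?_ ?_ ?_ ?_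
  · rintro ⟨k, l⟩ _
    dsimp only
    split_ifs with h
    · dsimp only
      rw [face_face h]; exact two_add _
    · dsimp only
      have := face_face (l := k - 1) (k := l) (by omega) x
      rw [this, show k - 1 + 1 = k by omega]; exact two_add _
  · rintro ⟨k, l⟩ _ _
    dsimp only
    split_ifs with h <;> simp only [ne_eq, Prod.mk.injEq] <;> omega
  · rintro ⟨k, l⟩ hk
    simp only [mem_product, mem_range] at hk
    dsimp only
    split_ifs with h <;> simp only [mem_product, mem_range] <;> omega
  · rintro ⟨k, l⟩ hk
    by_cases h : k ≤ l
    · simp only [h, if_true]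
      rw [if_neg (by omega)]; simp
    · simp only [h, if_false]
      rw [if_pos (by omega)]; exact Prod.ext (by change k - 1 + 1 = k; omega) rfl

lemma D_add {X : Type*} (a : ℕ) (f g : (ℕ → X) → ZMod 2) (x : ℕ → X) :
    D a (fun x => f x + g x) x = D a f x + D a g x := by
  unfold D; rw [← sum_add_distrib]

/-- small sequences -/
def Sm {X : Type*} [PseudoMetricSpace X] (ε : ℝ) (x : ℕ → X) : Prop := ∀ i j, dist (x i) (x j) < ε

lemma Sm.face {X : Type*} [PseudoMetricSpace X] {ε : ℝ} {x : ℕ → X} (h : Sm ε x) (k : ℕ) :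
    Sm ε (face k x) := by
  intro i j; simp only [TCS.face]; split_ifs <;> exact h _ _

lemma Sm.shift {X : Type*} [PseudoMetricSpace X] {ε : ℝ} {x : ℕ → X} (h : Sm ε x) (k : ℕ) :
    Sm ε (shift k x) := fun _ _ => h _ _

lemma W_succ {X : Type*} (m : ℕ) (z : ℕ → (ℕ → X) → ZMod 2) (i : ℕ) :
    W m z (i + 1) = cup (m * i) (W m z i) (z i) := by
  funext x; simp only [W, cup, prod_range_succ]

lemma W_loc {X : Type*} {m : ℕ} {z : ℕ → (ℕ → X) → ZMod 2} (hz : ∀ j, Loc (m + 1) (z j)) (i : ℕ) :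
    Loc (m * i + 1) (W m z i) := by
  induction i with
  | zero => intro x x' _; simp [W]
  | succ i ih =>
    rw [W_succ, Nat.mul_succ, add_assoc]
    exact ih.cup (hz i) (by omega)

lemma W_D {X : Type*} [PseudoMetricSpace X] {ε : ℝ} {m : ℕ} {z : ℕ → (ℕ → X) → ZMod 2}
    (hz : ∀ j, Loc (m + 1) (z j))
    (hd : ∀ j x, Sm ε x → D (m + 1) (z j) x = 0) (i : ℕ) :
    ∀ x, Sm ε x → D (m * i + 1) (W m z i) x = 0 := by
  induction i with
  | zero => intro x _; simp [W, D]; decide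
  | succ i ih =>
    intro x hx
    rw [W_succ, Nat.mul_succ, add_assoc, leibniz _ _ (W_loc hz i)]
    unfold cup
    rw [ih x hx, hd _ _ (hx.shift _)]
    ring

/-- invariance -/
def Inv {X G : Type*} (A : G → X → X) (f : (ℕ → X) → ZMod 2) : Prop :=
  ∀ g x, f (fun i => A g (x i)) = f x

lemma Inv.D {X G : Type*} {A : G → X → X} {f : (ℕ → X) → ZMod 2} (h : Inv A f) (a : ℕ) :
    Inv A (D a f) := by
  intro g x
  refine sum_congr rfl fun k _ => ?_
  rw [← h g (face k x)]
  congr 1; funext i; simp only [face]; split_ifs <;> rfl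

lemma Inv.cup {X G : Type*} {A : G → X → X} {f f' : (ℕ → X) → ZMod 2} (h : Inv A f)
    (h' : Inv A f') (d : ℕ) : Inv A (cup d f f') := by
  intro g x
  unfold TCS.cup
  rw [h, ← h' g (TCS.shift d x)]; rfl

lemma Inv.add {X G : Type*} {A : G → X → X} {f f' : (ℕ → X) → ZMod 2} (h : Inv A f)
    (h' : Inv A f') : Inv A (fun x => f x + f' x) := by
  intro g x
  simp only [h g x, h' g x]

lemma Inv.W {X G : Type*} {A : G → X → X} {m : ℕ} {z : ℕ → (ℕ → X) → ZMod 2}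
    (hz : ∀ j, Inv A (z j)) (i : ℕ) : Inv A (W m z i) := by
  induction i with
  | zero => intro g x; simp [TCS.W]
  | succ i ih => rw [W_succ]; exact ih.cup (hz i) _

lemma telescoping {X G : Type*} [PseudoMetricSpace X] {A : G → X → X} {ε : ℝ} {m : ℕ} (hm : 1 ≤ m)
    {y : (ℕ → X) → ZMod 2} {h : ℕ → (ℕ → X) → ZMod 2}
    (yl : Loc (m + 1) y) (hl : ∀ j, Loc m (h j)) (yi : Inv A y) (hi : ∀ j, Inv A (h j))
    (yd : ∀ x, Sm ε x → D (m + 1) y x = 0) (i : ℕ) (h1 : 1 ≤ i) :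
    ∃ t, Loc (m * i) t ∧ Inv A t ∧ ∀ x, Sm ε x →
      W m (fun _ => y) i x + W m (fun j x => y x + D m (h j) x) i x = D (m * i) t x := by
  set z : ℕ → (ℕ → X) → ZMod 2 := fun j x => y x + D m (h j) x with hz
  have zl : ∀ j, Loc (m + 1) (z j) := fun j => yl.add (hl j).D
  have zi : ∀ j, Inv A (z j) := fun j => yi.add ((hi j).D _)
  have zd : ∀ j x, Sm ε x → D (m + 1) (z j) x = 0 := by
    intro j x hx
    simp only [hz]
    rw [D_add, yd x hx, DD, add_zero]
  induction i, h1 using Nat.le_induction with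
  | base =>
    refine ⟨h 0, by simpa using hl 0, hi 0, fun x _ => ?_⟩
    simp only [W, range_one, prod_singleton, mul_zero, mul_one, hz]
    have : shift 0 x = x := by funext i; simp [shift]
    rw [this, ← add_assoc, two_add, zero_add]
  | succ i h1 ih =>
    obtain ⟨t, tl, ti, td⟩ := ih
    obtain ⟨d, hd⟩ : ∃ d, m * i = d + 1 := ⟨m * i - 1, by have := Nat.mul_pos hm h1; omega⟩
    refine ⟨fun x => cup d t y x + cup (m * i) (W m z i) (h i) x, ?_, ?_, ?_⟩
    · refine Loc.add ?_ ?_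
      · rw [Nat.mul_succ, hd, show d + 1 + m = d + (m + 1) by omega]
        rw [hd] at tl
        exact tl.cup yl (by omega)
      · rw [Nat.mul_succ]
        exact (W_loc zl i).cup (hl i) hm
    · exact (ti.cup yi _).add ((Inv.W zi i).cup (hi i) _)
    · intro x hx
      rw [hd] at tl
      have e1 := leibniz (m + 1) y tl x
      have e2 := leibniz m (h i) (W_loc zl i) x
      rw [D_add, Nat.mul_succ, e2, hd, show d + 1 + m = d + (m + 1) by omega, e1]
      rw [W_succ, W_succ]
      have e3 := td x hx
      have e4 := W_D zl zd i x hx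
      have e5 := yd _ (hx.shift d)
      rw [hd] at e3 e4
      simp only [cup, hd] at *
      rw [e4, e5, ← e3]
      simp only [hz]
      ring

/-- prism -/
def pr {X Y : Type*} (f g : X → Y) (a : ℕ) (x : ℕ → X) : ℕ → Y :=
  fun i => if i ≤ a then f (x i) else g (x (i - 1))

lemma prism {X Y : Type*} {m : ℕ} {ξ : (ℕ → Y) → ZMod 2} (hξ : Loc (m + 1) ξ) (f g : X → Y)
    (x : ℕ → X) :
    D m (fun x => ∑ a ∈ range m, ξ (pr f g a x)) x
      + ∑ a ∈ range (m + 1), D (m + 1) ξ (pr f g a x)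
      = ξ (fun i => f (x i)) + ξ (fun i => g (x i)) := by
  set E : ℕ → ℕ → Y := fun a i => if i < a then f (x i) else g (x i) with hE
  have key : ∀ a ∈ range (m + 1), D (m + 1) ξ (pr f g a x) =
      (∑ k ∈ range a, ξ (pr f g (a - 1) (face k x))) + (ξ (E a) + ξ (E (a + 1)))
       + ∑ k ∈ range (m - a), ξ (pr f g a (face (a + 1 + k) x)) := by
    intro a ha
    rw [mem_range] at ha
    unfold D
    rw [show m + 1 + 1 = a + 2 + (m - a) by omega, sum_range_add, sum_range_succ, sum_range_succ,
      add_assoc (∑ k ∈ range a, _)]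
    congr 1
    · congr 1
      · refine sum_congr rfl fun k hk => ?_
        rw [mem_range] at hk
        congr 1; funext i
        simp only [face, pr]
        split_ifs <;> first | rfl | omega | (congr 2; omega)
      · congr 1
        · congr 1; funext i
          simp only [face, pr, hE]
          split_ifs <;> first | rfl | omega
        · congr 1; funext i
          simp only [face, pr, hE]
          split_ifs <;> first | rfl | omega
    · refine sum_congr rfl fun k hk => ?_
      congr 1; funext i
      simp only [face, pr]
      split_ifs <;> first | rfl | omega | (congr 2; omega)
  rw [sum_congr rfl key, sum_add_distrib, sum_add_distrib]
  have t : ∑ a ∈ range (m + 1), (ξ (E a) + ξ (E (a + 1))) = ξ (E 0) + ξ (E (m + 1)) := by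
    generalize m + 1 = M
    induction M with
    | zero => simp [two_add]
    | succ M ih =>
      rw [sum_range_succ, ih]
      linear_combination two_add (ξ (E M))
  have t0 : ξ (E 0) = ξ (fun i => g (x i)) := by congr 1
  have t1 : ξ (E (m + 1)) = ξ (fun i => f (x i)) := hξ _ _ fun i hi => by simp [hE, hi]
  have s1 : ∑ a ∈ range (m + 1), ∑ k ∈ range a, ξ (pr f g (a - 1) (face k x))
      = ∑ a ∈ range m, ∑ k ∈ range (a + 1), ξ (pr f g a (face k x)) := by
    rw [sum_range_succ']; simp
  have s2 : ∑ a ∈ range (m + 1), ∑ k ∈ range (m - a), ξ (pr f g a (face (a + 1 + k) x))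
      = ∑ a ∈ range m, ∑ k ∈ range (m - a), ξ (pr f g a (face (a + 1 + k) x)) := by
    rw [sum_range_succ]; simp
  have s3 : D m (fun x => ∑ a ∈ range m, ξ (pr f g a x)) x
      = ∑ a ∈ range m, ∑ k ∈ range (a + 1), ξ (pr f g a (face k x))
       + ∑ a ∈ range m, ∑ k ∈ range (m - a), ξ (pr f g a (face (a + 1 + k) x)) := by
    unfold D
    rw [sum_comm, ← sum_add_distrib]
    refine sum_congr rfl fun a ha => ?_
    rw [mem_range] at ha
    rw [← sum_range_add (fun k => ξ (pr f g a (face k x)))]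
    congr 2; omega
  rw [t, t0, t1, s1, s2, s3]
  linear_combination two_add (∑ a ∈ range m, ∑ k ∈ range (a + 1), ξ (pr f g a (face k x)))
   + two_add (∑ a ∈ range m, ∑ k ∈ range (m - a), ξ (pr f g a (face (a + 1 + k) x)))

end TCS


namespace TCS

/-- grid points -/
abbrev Grid (n m N : ℕ) := Fin n → Fin m → ZMod N

/-- top simplices of the Freudenthal triangulation of the torus -/
abbrev Simp (n m N L : ℕ) := Grid n m N × (Fin n × Fin m ≃ Fin (L + 1))

/-- vertices of a simplex -/
def vert {n m N L : ℕ} (T : Simp n m N L) (i : ℕ) : Grid n m N :=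
  fun j k => T.1 j k + if (T.2 (j, k) : ℕ) < i then 1 else 0

/-- action -/
def act {n m N L : ℕ} (sp : Equiv.Perm (Fin n)) (T : Simp n m N L) : Simp n m N L :=
  (fun j k => T.1 (sp j) k, (Equiv.prodCongr sp (Equiv.refl (Fin m))).trans T.2)

lemma vert_act {n m N L : ℕ} (sp : Equiv.Perm (Fin n)) (T : Simp n m N L) (i : ℕ) :
    vert (act sp T) i = fun j => vert T i (sp j) := rfl

lemma act_act {n m N L : ℕ} (sp τ : Equiv.Perm (Fin n)) (T : Simp n m N L) :
    act sp (act τ T) = act (τ * sp) T := rfl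

lemma act_one {n m N L : ℕ} (T : Simp n m N L) : act 1 T = T := rfl

/-- orbit relation -/
def orb (n m N L : ℕ) : Setoid (Simp n m N L) where
  r T T' := ∃ sp, T' = act sp T
  iseqv := ⟨fun T => ⟨1, rfl⟩, by
    rintro T _ ⟨sp, rfl⟩
    exact ⟨sp⁻¹, by rw [act_act, mul_inv_cancel, act_one]⟩, by
    rintro T _ _ ⟨sp, rfl⟩ ⟨τ, rfl⟩
    exact ⟨sp * τ, act_act _ _ _⟩⟩

/-- interior reflection -/
def refl' {n m N L : ℕ} (s : Equiv.Perm (Fin (L + 1))) (T : Simp n m N L) : Simp n m N L :=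
  (T.1, T.2.trans s)

/-- cyclic shift -/
def cyc {n m N L : ℕ} (T : Simp n m N L) : Simp n m N L :=
  (fun j k => T.1 j k + (if T.2 (j, k) = 0 then 1 else 0), T.2.trans (Equiv.subRight 1))

/-- inverse cyclic shift -/
def cyc' {n m N L : ℕ} (T : Simp n m N L) : Simp n m N L :=
  (fun j k => T.1 j k - (if T.2 (j, k) + 1 = 0 then 1 else 0), T.2.trans (Equiv.addRight 1))

lemma cyc_cyc' {n m N L : ℕ} (T : Simp n m N L) : cyc (cyc' T) = T := by
  refine Prod.ext ?_ ?_
  · funext j k; simp only [cyc, cyc', Equiv.trans_apply, Equiv.coe_addRight]; exact sub_add_cancel _ _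
  · apply Equiv.ext; intro c; simp [cyc, cyc']

lemma cyc'_cyc {n m N L : ℕ} (T : Simp n m N L) : cyc' (cyc T) = T := by
  refine Prod.ext ?_ ?_
  · funext j k; simp [cyc, cyc']
  · apply Equiv.ext; intro c; simp [cyc, cyc']

noncomputable instance {n m N L : ℕ} [NeZero N] : Fintype (Quotient (orb n m N L)) :=
  Fintype.ofFinite _

/-- sum over orbits -/
noncomputable def S {n m N L : ℕ} [NeZero N] (φ : Simp n m N L → ZMod 2) : ZMod 2 :=
  ∑ q : Quotient (orb n m N L), φ q.out

lemma out_eq {n m N L : ℕ} {φ : Simp n m N L → ZMod 2}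
    (h : ∀ sp T, φ (act sp T) = φ T) (T : Simp n m N L) :
    φ (Quotient.out (Quotient.mk (orb n m N L) T)) = φ T := by
  obtain ⟨sp, hsp⟩ : (orb n m N L).r _ T := Quotient.mk_out (s := orb n m N L) T
  conv_rhs => rw [hsp]
  exact (h _ _).symm

lemma S_refl {n m N L : ℕ} [NeZero N] (hm : 1 < m) {φ : Simp n m N L → ZMod 2}
    (h : ∀ sp T, φ (act sp T) = φ T) {a b : Fin (L + 1)} (hab : a ≠ b)
    (hφ : ∀ T, φ (refl' (Equiv.swap a b) T) = φ T) : S φ = 0 := by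
  unfold S
  set R : Quotient (orb n m N L) → Quotient (orb n m N L) :=
    Quotient.map (refl' (Equiv.swap a b)) (by
      rintro T _ ⟨sp, rfl⟩
      exact ⟨sp, rfl⟩) with hR
  refine sum_involution (fun q _ => R q) ?_ ?_ ?_ ?_
  · intro q _
    induction q using Quotient.inductionOn with | _ T => ?_
    have : R (Quotient.mk _ T) = Quotient.mk _ (refl' (Equiv.swap a b) T) := rfl
    rw [this, out_eq h, out_eq h, hφ]
    exact two_add _
  · intro q _ _
    induction q using Quotient.inductionOn with | _ T => ?_
    have : R (Quotient.mk _ T) = Quotient.mk _ (refl' (Equiv.swap a b) T) := rfl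
    rw [this]
    intro e
    obtain ⟨sp, hsp⟩ : (orb n m N L).r _ _ := Quotient.exact e.symm
    have h2 : ∀ j k, Equiv.swap a b (T.2 (j, k)) = T.2 (sp j, k) := by
      intro j k
      have := congrArg (fun T : Simp n m N L => T.2 (j, k)) hsp
      simpa [refl', act] using this
    by_cases hs : ∃ j, sp j ≠ j
    · obtain ⟨j, hj⟩ := hs
      have mv : ∀ c, Equiv.swap a b c ≠ c → c = a ∨ c = b := by
        intro c hc
        by_contra hcc
        push Not at hcc
        exact hc (Equiv.swap_apply_of_ne_of_ne hcc.1 hcc.2)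
      have q1 : ∀ k, T.2 (j, k) = a ∨ T.2 (j, k) = b := by
        intro k
        apply mv
        rw [h2]
        intro e
        have := T.2.injective e
        simp at this
        exact hj this
      have q2 : ∀ k, T.2 (sp j, k) = a ∨ T.2 (sp j, k) = b := by
        intro k
        rw [← h2]
        rcases q1 k with e | e <;> rw [e] <;> simp
      have i1 : T.2 (j, ⟨0, by omega⟩) ≠ T.2 (j, ⟨1, hm⟩) := by
        intro e; have := T.2.injective e; simp at this
      have i2 : T.2 (j, ⟨0, by omega⟩) ≠ T.2 (sp j, ⟨0, by omega⟩) := by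
        intro e; have := T.2.injective e; simp at this; exact hj this.symm
      have i3 : T.2 (j, ⟨1, hm⟩) ≠ T.2 (sp j, ⟨0, by omega⟩) := by
        intro e; have := T.2.injective e; simp at this
      have := q1 ⟨0, by omega⟩
      have := q1 ⟨1, hm⟩
      have := q2 ⟨0, by omega⟩
      grind
    · push Not at hs
      obtain ⟨⟨j, k⟩, hc⟩ := T.2.surjective a
      have := h2 j k
      rw [hs, hc, Equiv.swap_apply_left] at this
      exact hab this.symm
  · intro q _; exact mem_univ _
  · intro q _
    induction q using Quotient.inductionOn with | _ T => ?_
    have e : ∀ T, R (Quotient.mk _ T) = Quotient.mk _ (refl' (Equiv.swap a b) T) := fun _ => rfl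
    rw [e, e]
    congr 1
    refine Prod.ext rfl ?_
    apply Equiv.ext; intro c; simp [refl']

lemma S_cyc {n m N L : ℕ} [NeZero N] {φ : Simp n m N L → ZMod 2}
    (h : ∀ sp T, φ (act sp T) = φ T) : S (fun T => φ (cyc T)) = S φ := by
  unfold S
  let R : Quotient (orb n m N L) ≃ Quotient (orb n m N L) :=
    { toFun := Quotient.map cyc (by rintro T _ ⟨sp, rfl⟩; exact ⟨sp, rfl⟩)
      invFun := Quotient.map cyc' (by rintro T _ ⟨sp, rfl⟩; exact ⟨sp, rfl⟩)
      left_inv := by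
        intro q
        induction q using Quotient.inductionOn with | _ T => ?_
        exact congrArg _ (cyc'_cyc T)
      right_inv := by
        intro q
        induction q using Quotient.inductionOn with | _ T => ?_
        exact congrArg _ (cyc_cyc' T) }
  rw [← Equiv.sum_comp R (fun q => φ q.out)]
  refine sum_congr rfl fun q _ => ?_
  induction q using Quotient.inductionOn with | _ T => ?_
  have : R (Quotient.mk _ T) = Quotient.mk _ (cyc T) := rfl
  dsimp only
  rw [this, out_eq h]
  exact out_eq (φ := fun T => φ (cyc T)) (fun sp T => h sp (cyc T)) T

lemma S_D {n m N L : ℕ} [NeZero N] (hm : 1 < m)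
    {t : (ℕ → Grid n m N) → ZMod 2} (tl : Loc (L + 1) t)
    (ti : Inv (fun (sp : Equiv.Perm (Fin n)) (g : Grid n m N) => fun j => g (sp j)) t) :
    S (fun T : Simp n m N L => D (L + 1) t (vert T)) = 0 := by
  have hinv : ∀ k (sp : Equiv.Perm (Fin n)) (T : Simp n m N L),
      t (face k (vert (act sp T))) = t (face k (vert T)) := by
    intro k sp T
    rw [← ti sp (face k (vert T))]
    congr 1; funext i; simp only [face]; split_ifs <;> rfl
  have e : S (fun T : Simp n m N L => D (L + 1) t (vert T)) =
      ∑ k ∈ range (L + 2), S (fun T : Simp n m N L => t (face k (vert T))) := by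
    unfold S D
    rw [sum_comm]
  rw [e, sum_range_succ, sum_range_succ', sum_eq_zero, zero_add]
  · have : S (fun T : Simp n m N L => t (face 0 (vert T))) =
      S (fun T : Simp n m N L => t (face (L + 1) (vert T))) := by
      rw [← S_cyc (φ := fun T => t (face (L + 1) (vert T))) (hinv (L + 1))]
      congr 1
      funext T
      apply tl
      intro i hi
      funext j k
      simp only [face]
      rw [if_neg (by omega), if_pos hi]
      simp only [vert, cyc, Equiv.trans_apply, Equiv.subRight_apply]
      rw [Fin.coe_sub_one]
      by_cases h0 : T.2 (j, k) = 0
      · rw [if_pos h0, if_pos h0, h0]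
        rw [if_pos (by simp), if_neg (by omega)]; ring
      · have : (T.2 (j, k) : ℕ) ≠ 0 := fun h => h0 (Fin.ext h)
        rw [if_neg h0, if_neg h0, add_zero]
        congr 2
        apply propext; omega
    rw [this]; exact two_add _
  · intro k hk
    rw [mem_range] at hk
    refine S_refl hm (hinv (k + 1)) (a := ⟨k, by omega⟩) (b := ⟨k + 1, by omega⟩) (by simp) ?_
    intro T
    congr 1
    have key : ∀ i, i ≠ k + 1 →
        vert (refl' (Equiv.swap (⟨k, by omega⟩ : Fin (L + 1)) ⟨k + 1, by omega⟩) T) i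
          = vert T i := by
      intro i hi
      funext j l
      simp only [vert, refl', Equiv.trans_apply]
      congr 2
      apply propext
      rw [Equiv.swap_apply_def]
      split_ifs with h1 h2
      · rw [h1]; simp only; omega
      · rw [h2]; simp only; omega
      · rfl
    funext i
    simp only [face]
    split_ifs with h
    · exact key _ (by omega)
    · exact key _ (by omega)

lemma S_single {n m N L : ℕ} [NeZero N] {φ : Simp n m N L → ZMod 2}
    (h : ∀ sp T, φ (act sp T) = φ T) (T0 : Simp n m N L) (h1 : φ T0 = 1)
    (h2 : ∀ T, φ T ≠ 0 → ∃ sp, T0 = act sp T) : S φ = 1 := by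
  unfold S
  rw [sum_eq_single (Quotient.mk _ T0), out_eq h, h1]
  · intro q _ hq
    by_contra hne
    obtain ⟨sp, hsp⟩ := h2 _ hne
    apply hq
    rw [← Quotient.out_eq q]
    exact (Quotient.sound ⟨sp, hsp⟩)
  · intro hh; exact absurd (mem_univ _) hh

end TCS


namespace TCS

lemma tele (u : ℕ → ZMod 2) (M : ℕ) : ∑ l ∈ range M, (u l + u (l + 1)) = u 0 + u M := by
  induction M with
  | zero => simp [two_add]
  | succ M ih =>
    rw [sum_range_succ, ih]
    linear_combination two_add (u M)

open Classical in
/-- total homotopy -/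
noncomputable def Hm {Y : Type*} [TopologicalSpace Y] {n : ℕ} (U : Set (Fin n → Y))
    (s : C(U, Fin n → C(unitInterval, Y))) (x : Fin n → Y) (t : unitInterval) (j : Fin n) : Y :=
  if hx : x ∈ U then s ⟨x, hx⟩ j t else x j

lemma exists_h {Y : Type*} [MetricSpace Y] {n m : ℕ} (hn : Even n) {ξ : (ℕ → Y) → ZMod 2}
    (hξ : Loc (m + 1) ξ) {ε : ℝ} (hε : 0 < ε) (hd : ∀ x, Sm ε x → D (m + 1) ξ x = 0)
    (U K : Set (Fin n → Y)) (hK : IsCompact K) (hKU : K ⊆ U)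
    (hinv : ∀ sg : Equiv.Perm (Fin n), ∀ x ∈ U, permTuple sg x ∈ U)
    (s : C(U, Fin n → C(unitInterval, Y)))
    (h0 : ∀ x : U, ∀ j j' : Fin n, s x j 0 = s x j' 0)
    (h1 : ∀ x : U, ∀ j : Fin n, s x j 1 = (x : Fin n → Y) j)
    (h2 : ∀ x : U, ∀ sg : Equiv.Perm (Fin n),
        ∀ hx : permTuple sg (x : Fin n → Y) ∈ U,
        s ⟨permTuple sg (x : Fin n → Y), hx⟩ = permTuple sg (s x)) :
    ∃ δ > 0, ∃ h : (ℕ → (Fin n → Y)) → ZMod 2, Loc m h ∧ Inv (permTuple (X := Y) (n := n)) h ∧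
      ∀ x, Sm δ x → (∀ i, x i ∈ K) → ∑ j, ξ (fun i => x i j) = D m h x := by
  have hperm : ∀ (sp : Equiv.Perm (Fin n)) x t j, Hm U s (permTuple sp x) t j = Hm U s x t (sp j) := by
    intro sp x t j
    unfold Hm
    by_cases hx : x ∈ U
    · rw [dif_pos hx, dif_pos (hinv sp x hx), h2 ⟨x, hx⟩ sp (hinv sp x hx)]; rfl
    · have : permTuple sp x ∉ U := by
        intro h
        apply hx
        have := hinv sp⁻¹ _ h
        have e : permTuple sp⁻¹ (permTuple sp x) = x := by
          funext j; simp [permTuple]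
        rwa [e] at this
      rw [dif_neg hx, dif_neg this]; rfl
  have hcont : ContinuousOn (fun p : (Fin n → Y) × unitInterval => Hm U s p.1 p.2) (K ×ˢ Set.univ) := by
    rw [continuousOn_iff_continuous_domRestrict]
    have : (K ×ˢ (Set.univ : Set unitInterval)).domRestrict
        (fun p : (Fin n → Y) × unitInterval => Hm U s p.1 p.2)
        = fun p j => s ⟨p.1.1, hKU p.2.1⟩ j p.1.2 := by
      funext p j
      simp only [Set.domRestrict_apply, Hm]
      rw [dif_pos (hKU p.2.1)]
    rw [this]
    fun_prop
  have huc := (hK.prod isCompact_univ).uniformContinuousOn_of_continuous hcont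
  rw [Metric.uniformContinuousOn_iff] at huc
  obtain ⟨δ, hδ, hu⟩ := huc ε hε
  obtain ⟨M, hM⟩ := exists_nat_one_div_lt hδ
  set tt : ℕ → unitInterval := fun l => Set.projIcc 0 1 zero_le_one ((l : ℝ) / (M + 1)) with htt
  have tt0 : tt 0 = 0 := by simp [htt]
  have tt1 : tt (M + 1) = 1 := by
    have : ((M + 1 : ℕ) : ℝ) / (M + 1) = 1 := by push_cast; field_simp
    simp only [htt, this]; simp
  have ttd : ∀ l, dist (tt l) (tt (l + 1)) < δ := by
    intro l
    have := (LipschitzWith.projIcc (zero_le_one (α := ℝ))).dist_le_mul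
      ((l : ℝ) / (M + 1)) (((l + 1 : ℕ) : ℝ) / (M + 1))
    refine lt_of_le_of_lt this (lt_of_le_of_lt (le_of_eq ?_) hM)
    rw [NNReal.coe_one, one_mul, dist_comm, Real.dist_eq]
    push_cast
    rw [← sub_div, add_sub_cancel_left, abs_of_pos (by positivity)]
  have close : ∀ x ∈ K, ∀ x' ∈ K, ∀ t t', dist x x' < δ → dist t t' < δ → ∀ j,
      dist (Hm U s x t j) (Hm U s x' t' j) < ε := by
    intro x hx x' hx' t t' hd hd' j
    have := hu (x, t) ⟨hx, trivial⟩ (x', t') ⟨hx', trivial⟩ (by rw [Prod.dist_eq]; exact max_lt hd hd')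
    exact lt_of_le_of_lt (dist_le_pi_dist _ _ j) this
  refine ⟨δ, hδ, fun x => ∑ j, ∑ l ∈ range (M + 1), ∑ a ∈ range m,
    ξ (pr (fun x => Hm U s x (tt l) j) (fun x => Hm U s x (tt (l + 1)) j) a x), ?_, ?_, ?_⟩
  · intro x x' hx
    refine sum_congr rfl fun j _ => sum_congr rfl fun l _ => sum_congr rfl fun a ha => hξ _ _ ?_
    rw [mem_range] at ha
    intro i hi
    simp only [pr]
    split_ifs
    · rw [hx i (by omega)]
    · rw [hx (i - 1) (by omega)]
  · intro sp x
    dsimp only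
    rw [← Equiv.sum_comp sp (fun j => ∑ l ∈ range (M + 1), ∑ a ∈ range m,
    ξ (pr (fun x => Hm U s x (tt l) j) (fun x => Hm U s x (tt (l + 1)) j) a x))]
    refine sum_congr rfl fun j _ => sum_congr rfl fun l _ => sum_congr rfl fun a ha => ?_
    congr 1; funext i
    simp only [pr, hperm]
  · intro x hx hxK
    have e : D m (fun x => ∑ j, ∑ l ∈ range (M + 1), ∑ a ∈ range m,
        ξ (pr (fun x => Hm U s x (tt l) j) (fun x => Hm U s x (tt (l + 1)) j) a x)) x
        = ∑ j, ∑ l ∈ range (M + 1), D m (fun x => ∑ a ∈ range m,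
        ξ (pr (fun x => Hm U s x (tt l) j) (fun x => Hm U s x (tt (l + 1)) j) a x)) x := by
      unfold D
      rw [sum_comm]
      refine sum_congr rfl fun j _ => ?_
      rw [sum_comm]
    have e2 : ∀ j, ∑ l ∈ range (M + 1), D m (fun x => ∑ a ∈ range m,
        ξ (pr (fun x => Hm U s x (tt l) j) (fun x => Hm U s x (tt (l + 1)) j) a x)) x
        = ξ (fun i => Hm U s (x i) 0 j) + ξ (fun i => x i j) := by
      intro j
      have e3 : ∀ l ∈ range (M + 1), D m (fun x => ∑ a ∈ range m,
        ξ (pr (fun x => Hm U s x (tt l) j) (fun x => Hm U s x (tt (l + 1)) j) a x)) x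
        = ξ (fun i => Hm U s (x i) (tt l) j) + ξ (fun i => Hm U s (x i) (tt (l + 1)) j) := by
        intro l _
        rw [← prism hξ (fun x => Hm U s x (tt l) j) (fun x => Hm U s x (tt (l + 1)) j) x,
          sum_eq_zero, add_zero]
        intro a _
        apply hd
        intro i i'
        have hz : ∀ t : unitInterval, dist t t < δ := fun t => by rw [dist_self]; exact hδ
        simp only [pr]
        split_ifs
        · exact close _ (hxK _) _ (hxK _) _ _ (hx _ _) (hz _) j
        · exact close _ (hxK _) _ (hxK _) _ _ (hx _ _) (ttd l) j
        · exact close _ (hxK _) _ (hxK _) _ _ (hx _ _) (by rw [dist_comm]; exact ttd l) j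
        · exact close _ (hxK _) _ (hxK _) _ _ (hx _ _) (hz _) j
      rw [sum_congr rfl e3, tele (fun l => ξ (fun i => Hm U s (x i) (tt l) j)), tt0, tt1]
      congr 2
      funext i
      unfold Hm
      rw [dif_pos (hKU (hxK i)), h1]
    rw [e, sum_congr rfl fun j _ => e2 j, sum_add_distrib]
    suffices hs : ∑ j, ξ (fun i => Hm U s (x i) 0 j) = 0 by rw [hs, zero_add]
    rcases Nat.eq_zero_or_pos n with rfl | hpos
    · simp
    have : ∀ j ∈ univ, ξ (fun i => Hm U s (x i) 0 j) = ξ (fun i => Hm U s (x i) 0 ⟨0, hpos⟩) := by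
      intro j _
      congr 1; funext i
      unfold Hm
      rw [dif_pos (hKU (hxK i)), dif_pos (hKU (hxK i))]
      exact h0 _ _ _
    rw [sum_congr rfl this, sum_const, card_univ, Fintype.card_fin]
    obtain ⟨r, rfl⟩ := hn
    rw [add_smul, two_add]

/-- coordinate -/
noncomputable def co {m : ℕ} (k : ℕ) (x : Sph m) : ℝ := x.1 (Fin.ofNat (m + 1) k)

lemma co_dist {m : ℕ} (k : ℕ) (x y : Sph m) : |co k x - co k y| ≤ dist x y := by
  have := EuclideanSpace.dist_eq x.1 y.1
  rw [Subtype.dist_eq, dist_eq_norm]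
  exact PiLp.norm_apply_le (x.1 - y.1) (Fin.ofNat (m + 1) k)

open Classical in
/-- indicator of negative `k+1`-st coordinate -/
noncomputable def sg {m : ℕ} (k : ℕ) (x : ℕ → Sph m) : ZMod 2 := if co (k + 1) (x 0) < 0 then 1 else 0

open Classical in
/-- indicator of positive `0`-th coordinate -/
noncomputable def s0 {m : ℕ} (x : ℕ → Sph m) : ZMod 2 := if 0 < co 0 (x 0) then 1 else 0

/-- product part -/
noncomputable def eta (m : ℕ) : (ℕ → Sph m) → ZMod 2 := W 1 (fun k => D 1 (sg k)) m

/-- the fundamental cochain -/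
noncomputable def xi (m : ℕ) : (ℕ → Sph m) → ZMod 2 := cup 0 s0 (eta m)

lemma sg_loc {m : ℕ} (k : ℕ) : Loc 1 (sg (m := m) k) := fun x x' h => by
  unfold sg; rw [h 0 (by omega)]

lemma s0_loc {m : ℕ} : Loc 1 (s0 (m := m)) := fun x x' h => by
  unfold s0; rw [h 0 (by omega)]

lemma eta_loc (m : ℕ) : Loc (m + 1) (eta m) := by
  have := W_loc (m := 1) (z := fun k => D 1 (sg (m := m) k)) (fun k => (sg_loc k).D) m
  rwa [one_mul] at this

lemma xi_loc (m : ℕ) : Loc (m + 1) (xi m) := by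
  have := s0_loc.cup (d := 0) (eta_loc m) (by omega)
  rwa [zero_add] at this

lemma D1 {X : Type*} (f : (ℕ → X) → ZMod 2) (x : ℕ → X) : D 1 f x = f (face 0 x) + f (face 1 x) := by
  simp [D, sum_range_succ]

/-- the explicit formula for `xi` -/
lemma xi_eq (m : ℕ) (x : ℕ → Sph m) : xi m x = s0 x * ∏ k ∈ range m,
    (sg k (fun _ => x (k + 1)) + sg k (fun _ => x k)) := by
  unfold xi cup eta W
  congr 1
  refine prod_congr rfl fun k _ => ?_
  dsimp only
  rw [D1]
  have : shift 0 x = x := by funext i; simp [shift]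
  rw [this]
  congr 1 <;> refine sg_loc k _ _ fun i hi => ?_ <;> obtain rfl : i = 0 := by omega
  all_goals simp [face, shift]

lemma xi_D {m : ℕ} {ε : ℝ} (hε : (m + 1) * (2 * ε) ^ 2 ≤ 1) (x : ℕ → Sph m)
    (hx : Sm ε x) : D (m + 1) (xi m) x = 0 := by
  have heta : D (m + 1) (eta m) (shift 0 x) = 0 := by
    have := W_D (ε := ε) (m := 1) (z := fun k => D 1 (sg (m := m) k)) (fun k => (sg_loc k).D)
      (fun k x _ => DD _ _ _) m _ (hx.shift 0)
    rwa [one_mul] at this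
  have := leibniz (d := 0) (m + 1) (eta m) s0_loc x
  rw [zero_add, zero_add] at this
  unfold xi
  rw [this]
  unfold cup
  rw [heta, mul_zero, add_zero]
  by_contra hne
  have n1 := left_ne_zero_of_mul hne
  have n2 := right_ne_zero_of_mul hne
  have hsmall : ∀ k i i', |co k (x i) - co k (x i')| < ε := fun k i i' =>
    lt_of_le_of_lt (co_dist _ _ _) (hx i i')
  have b0 : |co 0 (x 0)| < 2 * ε := by
    have h := hsmall 0 0 1
    rw [D1] at n1
    have f0 : face 0 x 0 = x 1 := by simp [face]
    have f1 : face 1 x 0 = x 0 := by simp [face]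
    unfold s0 at n1
    rw [f0, f1] at n1
    rw [abs_lt] at *
    split_ifs at n1
    · exact absurd (by decide) n1
    · constructor <;> linarith
    · constructor <;> linarith
    · simp at n1
  have bk : ∀ k < m, |co (k + 1) (x 0)| < 2 * ε := by
    intro k hk
    unfold eta W at n2
    rw [prod_ne_zero_iff] at n2
    have n3 := n2 k (mem_range.2 hk)
    dsimp only at n3
    rw [D1] at n3
    unfold sg at n3
    set i0 := face 0 (shift (1 * k) (shift 1 x)) 0 with hi0
    set i1 := face 1 (shift (1 * k) (shift 1 x)) 0 with hi1
    have g0 : i0 = x (k + 2) := by simp only [hi0, face, shift]; simp; congr 1; omega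
    have g1 : i1 = x (k + 1) := by simp only [hi1, face, shift]; simp; congr 1; omega
    rw [g0, g1] at n3
    have h := hsmall (k + 1) (k + 2) (k + 1)
    have h' := hsmall (k + 1) 0 (k + 1)
    rw [abs_lt] at *
    split_ifs at n3
    · exact absurd (by decide) n3
    · constructor <;> linarith
    · constructor <;> linarith
    · simp at n3
  have ball : ∀ c : Fin (m + 1), (x 0).1 c ^ 2 < (2 * ε) ^ 2 := by
    intro c
    have : |(x 0).1 c| < 2 * ε := by
      rcases Fin.eq_zero_or_eq_succ c with rfl | ⟨k, rfl⟩
      · simpa [co] using b0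
      · have := bk k k.2
        have e : Fin.ofNat (m + 1) (k + 1) = k.succ := by
          apply Fin.ext; simp [Fin.ofNat, Nat.mod_eq_of_lt]
        simpa only [co, e] using this
    rw [← sq_abs]
    exact pow_lt_pow_left₀ this (abs_nonneg _) (by norm_num)
  have hnorm : ‖(x 0).1‖ = 1 := by simp
  have hs : ∑ c, (x 0).1 c ^ 2 = 1 := by
    have := EuclideanSpace.real_norm_sq_eq (x 0).1
    rw [hnorm] at this
    linarith
  have : ∑ c, (x 0).1 c ^ 2 < ∑ c : Fin (m + 1), (2 * ε) ^ 2 :=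
    sum_lt_sum_of_nonempty univ_nonempty fun c _ => ball c
  rw [sum_const, card_univ, Fintype.card_fin, nsmul_eq_mul] at this
  push_cast at this
  linarith

end TCS


namespace TCS

lemma line_ne {m : ℕ} {q x : Sph m} (hx : x ≠ q) (t : unitInterval) :
    (t : ℝ) • x.1 - (1 - (t : ℝ)) • q.1 ≠ 0 := by
  intro h
  have h1 : (t : ℝ) • x.1 = (1 - (t : ℝ)) • q.1 := sub_eq_zero.1 h
  have hq : ‖q.1‖ = 1 := by simp
  have hxn : ‖x.1‖ = 1 := by simp
  have h2 := congrArg norm h1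
  rw [norm_smul, norm_smul, hq, hxn, Real.norm_eq_abs, Real.norm_eq_abs, abs_of_nonneg t.2.1,
    abs_of_nonneg (by linarith [t.2.2])] at h2
  have h3 : (t : ℝ) = 1 / 2 := by linarith
  rw [h3] at h1
  apply hx
  apply Subtype.ext
  have : (1 - 1 / 2 : ℝ) = 1 / 2 := by norm_num
  rw [this] at h1
  exact smul_right_injective _ (by norm_num : (1 / 2 : ℝ) ≠ 0) h1

lemma normalize_mem {m : ℕ} {v : EuclideanSpace ℝ (Fin (m + 1))} (hv : v ≠ 0) :
    ‖v‖⁻¹ • v ∈ Metric.sphere (0 : EuclideanSpace ℝ (Fin (m + 1))) 1 := by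
  rw [mem_sphere_zero_iff_norm, norm_smul, norm_inv, norm_norm,
    inv_mul_cancel₀ (norm_ne_zero_iff.2 hv)]

/-- segment on the sphere from `-q` to `x` -/
noncomputable def seg {m : ℕ} (q : Sph m) (x : Sph m) (hx : x ≠ q) (t : unitInterval) : Sph m :=
  ⟨‖(t : ℝ) • x.1 - (1 - (t : ℝ)) • q.1‖⁻¹ • ((t : ℝ) • x.1 - (1 - (t : ℝ)) • q.1),
    normalize_mem (line_ne hx t)⟩

lemma sph_infinite {m : ℕ} (hm : 1 ≤ m) : Infinite (Sph m) := by
  let f : unitInterval → Sph m := fun t => 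
    ⟨WithLp.toLp 2 (fun i => if i = ⟨0, by omega⟩ then (t : ℝ) else if i = ⟨1, by omega⟩ then √(1 - (t : ℝ) ^ 2) else 0), by
      have ht : (0 : ℝ) ≤ 1 - (t : ℝ) ^ 2 := by nlinarith [t.2.1, t.2.2]
      rw [mem_sphere_zero_iff_norm, EuclideanSpace.norm_eq, Real.sqrt_eq_one]
      obtain ⟨m, rfl⟩ : ∃ m', m = m' + 1 := ⟨m - 1, by omega⟩
      rw [Fin.sum_univ_succ, Fin.sum_univ_succ, sum_eq_zero]
      · have h1 : (Fin.succ 0 : Fin (m + 1 + 1)) = ⟨1, by omega⟩ := rfl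
        simp only [h1]
        simp [sq_abs, Real.sq_sqrt ht]
      · intro i _
        simp [Fin.ext_iff]⟩
  have : Infinite unitInterval := (Set.Icc_infinite (zero_lt_one (α := ℝ))).to_subtype
  refine Infinite.of_injective f fun t t' h => ?_
  have := congrArg (fun x : Sph m => x.1 ⟨0, by omega⟩) h
  apply Subtype.ext
  simpa [f] using this

lemma upper {m n : ℕ} (hm : 1 ≤ m) : HasSymPlanners (Sph m) n (n + 1) := by
  have := sph_infinite hm
  let q : ℕ ↪ Sph m := Infinite.natEmbedding _
  refine ⟨fun i => {x | ∀ j, x j ≠ q i}, ?_, ?_, ?_, ?_⟩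
  · intro i
    simp only [Set.ofPred_forall]
    exact isOpen_iInter_of_finite fun j => isOpen_ne_fun (continuous_apply j) continuous_const
  · rw [Set.eq_univ_iff_forall]
    intro x
    by_contra h
    simp only [Set.mem_iUnion, Set.mem_ofPred_eq, not_exists, not_forall, not_not] at h
    choose f hf using h
    have inj : Function.Injective f := by
      intro i i' e
      have : q i = q i' := by rw [← hf i, ← hf i', e]
      exact Fin.ext (q.injective this)
    have := Fintype.card_le_of_injective f inj
    simp at this
  · intro i sg x hx j
    exact hx _
  · intro i
    have hc : ∀ j : Fin n, Continuous (fun p : {x : Fin n → Sph m | ∀ j, x j ≠ q i} × unitInterval =>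
        seg (q i) (p.1.1 j) (p.1.2 j) p.2) := by
      intro j
      unfold seg
      refine Continuous.subtype_mk ?_ _
      have hb : Continuous (fun p : {x : Fin n → Sph m | ∀ j, x j ≠ q i} × unitInterval =>
          (p.2 : ℝ) • (p.1.1 j).1 - (1 - (p.2 : ℝ)) • (q i).1) := by
        have c1 : Continuous (fun p : {x : Fin n → Sph m | ∀ j, x j ≠ q i} × unitInterval =>
          (p.2 : ℝ)) := continuous_subtype_val.comp continuous_snd
        have c2 : Continuous (fun p : {x : Fin n → Sph m | ∀ j, x j ≠ q i} × unitInterval =>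
          (p.1.1 j).1) := continuous_subtype_val.comp
            ((continuous_apply j).comp (continuous_subtype_val.comp continuous_fst))
        exact (c1.smul c2).sub ((continuous_const.sub c1).smul continuous_const)
      exact (hb.norm.inv₀ fun p => norm_ne_zero_iff.2 (line_ne (p.1.2 j) p.2)).smul hb
    refine ⟨⟨fun x j => (ContinuousMap.curry ⟨_, hc j⟩) x, by fun_prop⟩, ?_, ?_, ?_⟩
    · intro x j j'
      simp [seg]
    · intro x j
      apply Subtype.ext
      simp [seg]
    · intro x sg hx
      rfl

end TCS


namespace TCS

/-- unnormalized torus map -/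
noncomputable def qv {m : ℕ} (w : Fin m → Circle) : EuclideanSpace ℝ (Fin (m + 1)) :=
  WithLp.toLp 2 (Fin.cons (∑ k, (w k : ℂ).re - m + 1) (fun k => (w k : ℂ).im))

lemma qv_zero {m : ℕ} (w : Fin m → Circle) : qv w 0 = ∑ k, (w k : ℂ).re - m + 1 := rfl

lemma qv_succ {m : ℕ} (w : Fin m → Circle) (k : Fin m) : qv w k.succ = (w k : ℂ).im := rfl

lemma circ (z : Circle) : (z : ℂ).re ^ 2 + (z : ℂ).im ^ 2 = 1 := by
  have := Circle.normSq_coe z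
  rw [Complex.normSq_apply] at this
  linarith

lemma circ_dist (a b : Circle) : dist a b = ‖(a : ℂ) - (b : ℂ)‖ := by
  rw [← dist_eq_norm]; rfl

lemma re_le (z : Circle) : (z : ℂ).re ≤ 1 := by nlinarith [circ z, sq_nonneg (z : ℂ).im]

lemma sum_one_sub {m : ℕ} (w : Fin m → Circle) :
    ∑ k, (w k : ℂ).re - m + 1 = 1 - ∑ k, (1 - (w k : ℂ).re) := by
  rw [sum_sub_distrib, sum_const, card_univ, Fintype.card_fin, nsmul_eq_mul]; ring

lemma le_sum_one_sub {m : ℕ} (w : Fin m → Circle) (k : Fin m) :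
    1 - (w k : ℂ).re ≤ ∑ k, (1 - (w k : ℂ).re) :=
  single_le_sum (f := fun k => 1 - (w k : ℂ).re) (fun k _ => by linarith [re_le (w k)]) (mem_univ k)

lemma qv_ne {m : ℕ} (w : Fin m → Circle) : qv w ≠ 0 := by
  intro h
  have h0 : ∑ k, (w k : ℂ).re - m + 1 = 0 := by rw [← qv_zero, h]; rfl
  have hk : ∀ k, (w k : ℂ).im = 0 := fun k => by rw [← qv_succ, h]; rfl
  have hr : ∀ k, (w k : ℂ).re = 1 ∨ (w k : ℂ).re = -1 := fun k => by
    have := circ (w k)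
    rw [hk] at this
    have h2 : ((w k : ℂ).re - 1) * ((w k : ℂ).re + 1) = 0 := by linarith
    rcases mul_eq_zero.1 h2 with h | h
    · left; linarith
    · right; linarith
  rw [sum_one_sub] at h0
  by_cases he : ∃ k, (w k : ℂ).re = -1
  · obtain ⟨k, hk⟩ := he
    have := le_sum_one_sub w k
    linarith
  · push Not at he
    have : ∑ k, (1 - (w k : ℂ).re) = 0 := sum_eq_zero fun k _ => by
      rcases hr k with h | h
      · rw [h]; ring
      · exact absurd h (he k)
    linarith

/-- the torus map -/
noncomputable def pt {m : ℕ} (w : Fin m → Circle) : Sph m :=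
  ⟨‖qv w‖⁻¹ • qv w, normalize_mem (qv_ne w)⟩

lemma pt_cont {m : ℕ} : Continuous (pt (m := m)) := by
  have hq : Continuous (qv (m := m)) := by
    refine (PiLp.continuous_toLp 2 _).comp (continuous_pi fun c => ?_)
    rcases Fin.eq_zero_or_eq_succ c with rfl | ⟨k, rfl⟩
    · simp only [Fin.cons_zero]; fun_prop
    · simp only [Fin.cons_succ]; fun_prop
  exact ((hq.norm.inv₀ fun w => norm_ne_zero_iff.2 (qv_ne w)).smul hq).subtype_mk _

lemma co_zero_pt {m : ℕ} (w : Fin m → Circle) :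
    0 < co 0 (pt w) ↔ ∑ k, (1 - (w k : ℂ).re) < 1 := by
  have : co 0 (pt w) = ‖qv w‖⁻¹ * (1 - ∑ k, (1 - (w k : ℂ).re)) := by
    rw [← sum_one_sub, ← qv_zero]; rfl
  rw [this, mul_pos_iff_of_pos_left (inv_pos.2 (norm_pos_iff.2 (qv_ne w)))]
  exact sub_pos

lemma co_succ_pt {m : ℕ} (w : Fin m → Circle) (k : Fin m) :
    co (k + 1) (pt w) < 0 ↔ (w k : ℂ).im < 0 := by
  have e : Fin.ofNat (m + 1) (k + 1) = k.succ := by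
    apply Fin.ext; simp [Fin.ofNat, Nat.mod_eq_of_lt]
  have : co (k + 1) (pt w) = ‖qv w‖⁻¹ * (w k : ℂ).im := by
    rw [← qv_succ]; unfold co; rw [e]; rfl
  rw [this, mul_neg_iff]
  have := inv_pos.2 (norm_pos_iff.2 (qv_ne w))
  constructor
  · rintro (h | h)
    · exact h.2
    · linarith [h.1]
  · exact fun h => Or.inl ⟨this, h⟩

lemma toC_nat {M : ℕ} [NeZero (2 * M)] (hM : 0 < M) (a : ℕ) :
    ((ZMod.toCircle (a : ZMod (2 * M)) : Circle) : ℂ).re = Real.cos (a / M * Real.pi) ∧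
    ((ZMod.toCircle (a : ZMod (2 * M)) : Circle) : ℂ).im = Real.sin (a / M * Real.pi) := by
  rw [ZMod.toCircle_natCast]
  have : (2 * Real.pi * Complex.I * a / ((2 * M : ℕ) : ℂ) : ℂ)
      = ((a / M * Real.pi : ℝ) : ℂ) * Complex.I := by
    have : (M : ℂ) ≠ 0 := by exact_mod_cast hM.ne'
    push_cast
    field_simp
  rw [this]
  exact ⟨Complex.exp_ofReal_mul_I_re _, Complex.exp_ofReal_mul_I_im _⟩

lemma im_nonneg {M : ℕ} [NeZero (2 * M)] (hM : 0 < M) {a : ℕ} (ha : a ≤ M) :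
    0 ≤ ((ZMod.toCircle (a : ZMod (2 * M)) : Circle) : ℂ).im := by
  rw [(toC_nat hM a).2]
  have hM' : (0 : ℝ) < M := by exact_mod_cast hM
  apply Real.sin_nonneg_of_nonneg_of_le_pi
  · positivity
  · have : (a : ℝ) / M ≤ 1 := by rw [div_le_one hM']; exact_mod_cast ha
    nlinarith [Real.pi_pos]

lemma im_neg {M : ℕ} [NeZero (2 * M)] (hM : 0 < M) {a : ℕ} (ha : M < a) (ha' : a < 2 * M) :
    ((ZMod.toCircle (a : ZMod (2 * M)) : Circle) : ℂ).im < 0 := by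
  rw [(toC_nat hM a).2]
  have hM' : (0 : ℝ) < M := by exact_mod_cast hM
  rw [← Real.sin_sub_two_pi]
  have h1 : 1 < (a : ℝ) / M := by rw [one_lt_div hM']; exact_mod_cast ha
  have h2 : (a : ℝ) / M < 2 := by rw [div_lt_iff₀ hM']; exact_mod_cast ha'
  apply Real.sin_neg_of_neg_of_neg_pi_lt <;> nlinarith [Real.pi_pos]

lemma sign_change {M : ℕ} [NeZero (2 * M)] (hM : 0 < M) (v : ZMod (2 * M))
    (hre : 0 < ((ZMod.toCircle v : Circle) : ℂ).re)
    (hne : ¬ (((ZMod.toCircle (v + 1) : Circle) : ℂ).im < 0 ↔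
      ((ZMod.toCircle v : Circle) : ℂ).im < 0)) : v = -1 := by
  obtain ⟨a, ha, rfl⟩ : ∃ a : ℕ, a < 2 * M ∧ (a : ZMod (2 * M)) = v :=
    ⟨v.val, ZMod.val_lt v, ZMod.natCast_zmod_val v⟩
  by_cases h1 : a + 1 = 2 * M
  · have : ((a + 1 : ℕ) : ZMod (2 * M)) = 0 := by rw [h1]; exact ZMod.natCast_self _
    push_cast at this
    exact eq_neg_of_add_eq_zero_left this
  exfalso
  have e : (a : ZMod (2 * M)) + 1 = ((a + 1 : ℕ) : ZMod (2 * M)) := by push_cast; rfl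
  rw [e] at hne
  rcases lt_trichotomy a M with h | h | h
  · have := im_nonneg hM h.le
    have := im_nonneg hM (show a + 1 ≤ M by omega)
    apply hne
    constructor <;> intro <;> linarith
  · rw [(toC_nat hM a).1, h, div_self (by exact_mod_cast hM.ne'), one_mul, Real.cos_pi] at hre
    linarith
  · exact hne ⟨fun _ => im_neg hM h ha, fun _ => im_neg hM (by omega) (by omega)⟩

lemma neg_one_im {M : ℕ} [NeZero (2 * M)] (hM : 1 < M) :
    ((ZMod.toCircle (-1 : ZMod (2 * M)) : Circle) : ℂ).im < 0 := by
  have : (-1 : ZMod (2 * M)) = ((2 * M - 1 : ℕ) : ZMod (2 * M)) := by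
    rw [Nat.cast_sub (by omega), ZMod.natCast_self]; simp
  rw [this]
  exact im_neg (by omega) (by omega) (by omega)

lemma fine (δ : ℝ) (hδ : 0 < δ) : ∃ M : ℕ, 1 < M ∧ ∀ _ : NeZero (2 * M),
    dist (ZMod.toCircle (1 : ZMod (2 * M)) : Circle) 1 < δ := by
  obtain ⟨K, hK⟩ := exists_nat_gt (Real.pi / δ)
  refine ⟨K + 2, by omega, fun _ => ?_⟩
  have e : ((ZMod.toCircle (1 : ZMod (2 * (K + 2))) : Circle) : ℂ)
      = Complex.exp (Complex.I * ((Real.pi / (K + 2) : ℝ) : ℂ)) := by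
    have := ZMod.toCircle_natCast (N := 2 * (K + 2)) 1
    rw [Nat.cast_one] at this
    rw [this]
    congr 1
    have h2 : (K : ℂ) + 2 ≠ 0 := by exact_mod_cast (by omega : K + 2 ≠ 0)
    push_cast
    field_simp
  rw [circ_dist, e, Circle.coe_one]
  refine lt_of_le_of_lt Real.norm_exp_I_mul_ofReal_sub_one_le ?_
  rw [Real.norm_eq_abs, abs_of_pos (by positivity), div_lt_iff₀ (by positivity)]
  rw [div_lt_iff₀ hδ] at hK
  nlinarith

/-- the map from grid points to the configuration -/
noncomputable def Phi {n m N : ℕ} [NeZero N] (g : Grid n m N) : Fin n → Sph m :=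
  fun j => pt (fun k => ZMod.toCircle (g j k))

lemma zmod2 {a : ZMod 2} (h : a ≠ 0) : a = 1 := by
  revert a; decide

lemma sg_add_ne {m : ℕ} (k : ℕ) (x y : Sph m) :
    (sg k (fun _ => x) + sg k (fun _ => y) ≠ 0) ↔ ¬ (co (k + 1) x < 0 ↔ co (k + 1) y < 0) := by
  unfold sg
  by_cases h : co (k + 1) x < 0 <;> by_cases h' : co (k + 1) y < 0 <;> simp [h, h']
  decide

lemma xi_vert {n m M L : ℕ} [NeZero (2 * M)] (hM : 1 < M)
    (hclose : dist (ZMod.toCircle (1 : ZMod (2 * M)) : Circle) 1 < 1 / (m + 1))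
    (T : Simp n m (2 * M) L) (i : ℕ) (j : Fin n) :
    xi m (fun a => Phi (vert T (m * i + a)) j) ≠ 0 ↔
      ∀ k, (T.2 (j, k) : ℕ) = m * i + k ∧ T.1 j k = -1 := by
  rw [xi_eq, mul_ne_zero_iff, prod_ne_zero_iff]
  have hs0 : s0 (fun a => Phi (vert T (m * i + a)) j) ≠ 0 ↔
      ∑ k, (1 - ((ZMod.toCircle (vert T (m * i) j k) : Circle) : ℂ).re) < 1 := by
    rw [← co_zero_pt]
    unfold s0 Phi
    simp
  have hk : ∀ k : Fin m, (sg k (fun _ => Phi (vert T (m * i + (k + 1))) j)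
      + sg k (fun _ => Phi (vert T (m * i + k)) j) ≠ 0) ↔
      ¬ (((ZMod.toCircle (vert T (m * i + k + 1) j k) : Circle) : ℂ).im < 0 ↔
       ((ZMod.toCircle (vert T (m * i + k) j k) : Circle) : ℂ).im < 0) := by
    intro k
    rw [sg_add_ne]
    unfold Phi
    rw [co_succ_pt, co_succ_pt]; rfl
  rw [hs0]
  constructor
  · rintro ⟨h1, h2⟩ k
    have h3 := (hk k).1 (h2 k (mem_range.2 k.2))
    have hρ : (T.2 (j, k) : ℕ) = m * i + k := by
      by_contra hne
      apply h3
      have : vert T (m * i + k + 1) j k = vert T (m * i + k) j k := by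
        unfold vert
        congr 2
        apply propext; omega
      rw [this]
    refine ⟨hρ, ?_⟩
    have v0 : vert T (m * i) j k = T.1 j k := by unfold vert; rw [if_neg (by omega), add_zero]
    have v1 : vert T (m * i + k) j k = T.1 j k := by unfold vert; rw [if_neg (by omega), add_zero]
    have v2 : vert T (m * i + k + 1) j k = T.1 j k + 1 := by unfold vert; rw [if_pos (by omega)]
    rw [v1, v2] at h3
    refine sign_change (by omega) _ ?_ h3
    have := le_sum_one_sub (fun k => ZMod.toCircle (vert T (m * i) j k)) k
    rw [v0] at this
    linarith
  · intro h
    have v0 : ∀ k, vert T (m * i) j k = -1 := fun k => by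
      unfold vert; rw [if_neg (by rw [(h k).1]; omega), add_zero, (h k).2]
    constructor
    · have hre : 1 - ((ZMod.toCircle (-1 : ZMod (2 * M)) : Circle) : ℂ).re < 1 / (m + 1) := by
        refine lt_of_le_of_lt ?_ hclose
        rw [AddChar.map_neg_eq_inv, Circle.coe_inv_eq_conj, Complex.conj_re, dist_comm,
          circ_dist]
        have := Complex.re_le_norm (((1 : Circle) : ℂ) - ((ZMod.toCircle (1 : ZMod (2 * M)) : Circle) : ℂ))
        rw [Complex.sub_re, Circle.coe_one, Complex.one_re] at this
        rw [Circle.coe_one]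
        exact this
      simp only [v0]
      rw [sum_const, card_univ, Fintype.card_fin, nsmul_eq_mul]
      have hm0 : (0 : ℝ) ≤ m := Nat.cast_nonneg m
      calc (m : ℝ) * _ ≤ m * (1 / (m + 1)) := mul_le_mul_of_nonneg_left hre.le hm0
        _ < 1 := by rw [mul_one_div, div_lt_one (by positivity)]; linarith
    · intro k hkm
      rw [mem_range] at hkm
      refine (hk ⟨k, hkm⟩).2 ?_
      have hh := h ⟨k, hkm⟩
      have v1 : vert T (m * i + k) j ⟨k, hkm⟩ = -1 := by
        unfold vert; rw [if_neg (by rw [hh.1]; simp), add_zero, hh.2]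
      have v2 : vert T (m * i + k + 1) j ⟨k, hkm⟩ = 0 := by
        unfold vert; rw [if_pos (by rw [hh.1]; simp), hh.2]; ring
      dsimp only
      rw [v1, v2]
      have := neg_one_im hM
      simp [this]

/-- symmetrized cochain -/
noncomputable def ys (n m : ℕ) (x : ℕ → Fin n → Sph m) : ZMod 2 := ∑ j, xi m (fun i => x i j)

lemma ys_loc (n m : ℕ) : Loc (m + 1) (ys n m) := fun x x' h =>
  sum_congr rfl fun j _ => xi_loc m _ _ fun i hi => by rw [h i hi]

lemma ys_inv (n m : ℕ) : Inv (permTuple (X := Sph m) (n := n)) (ys n m) := fun sp x =>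
  Equiv.sum_comp sp (fun j => xi m (fun i => x i j))

lemma ys_D {n m : ℕ} {ε : ℝ} (hε : (m + 1) * (2 * ε) ^ 2 ≤ 1) (x : ℕ → Fin n → Sph m)
    (hx : Sm ε x) : D (m + 1) (ys n m) x = 0 := by
  have : D (m + 1) (ys n m) x = ∑ j, D (m + 1) (xi m) (fun i => x i j) := by
    unfold D ys
    rw [sum_comm]
    refine sum_congr rfl fun j _ => sum_congr rfl fun k _ => ?_
    congr 1; funext i; simp only [face]; split_ifs <;> rfl
  rw [this]
  exact sum_eq_zero fun j _ => xi_D hε _ fun i i' => lt_of_le_of_lt (dist_le_pi_dist _ _ j) (hx i i')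

lemma top_eval {n m M L : ℕ} [NeZero (2 * M)] (hm : 1 ≤ m) (hM : 1 < M) (hL : n * m = L + 1)
    (hclose : dist (ZMod.toCircle (1 : ZMod (2 * M)) : Circle) 1 < 1 / (m + 1)) :
    S (fun T : Simp n m (2 * M) L => W m (fun _ => ys n m) n (fun i => Phi (vert T i))) = 1 := by
  refine S_single ?_ (fun _ _ => -1, finProdFinEquiv.trans (finCongr hL)) ?_ ?_
  · intro sp T
    exact Inv.W (fun _ => ys_inv n m) n sp (fun i => Phi (vert T i))
  · unfold W
    refine prod_eq_one fun i hi => ?_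
    rw [mem_range] at hi
    change ys n m _ = 1
    unfold ys
    rw [sum_eq_single (⟨i, hi⟩ : Fin n)]
    · apply zmod2
      refine (xi_vert hM hclose _ i ⟨i, hi⟩).2 fun k => ⟨?_, rfl⟩
      simp [finProdFinEquiv_apply_val]; ring
    · intro j _ hj
      by_contra hne
      have := ((xi_vert hM hclose _ i j).1 hne ⟨0, hm⟩).1
      simp [finProdFinEquiv_apply_val] at this
      apply hj
      rcases this with h | h
      · exact Fin.ext h
      · omega
    · intro h; exact absurd (mem_univ _) h
  · intro T hT
    unfold W at hT
    rw [prod_ne_zero_iff] at hT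
    have hex : ∀ i : Fin n, ∃ j, ∀ k, (T.2 (j, k) : ℕ) = m * i + k ∧ T.1 j k = -1 := by
      intro i
      have := hT i (mem_range.2 i.2)
      unfold ys at this
      obtain ⟨j, _, hj⟩ := exists_ne_zero_of_sum_ne_zero this
      exact ⟨j, (xi_vert hM hclose T i j).1 hj⟩
    choose J hJ using hex
    have inj : Function.Injective J := by
      intro i i' e
      have h1 := (hJ i ⟨0, hm⟩).1
      have h2 := (hJ i' ⟨0, hm⟩).1
      rw [e, h2] at h1
      simp at h1
      rcases h1 with h | h
      · exact (Fin.ext h).symm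
      · omega
    refine ⟨Equiv.ofBijective J (Finite.injective_iff_bijective.1 inj), ?_⟩
    refine Prod.ext ?_ ?_
    · funext j k
      exact ((hJ j k).2).symm
    · apply Equiv.ext
      rintro ⟨j, k⟩
      apply Fin.ext
      have := (hJ j k).1
      simp [finProdFinEquiv_apply_val, act, this]; ring

end TCS


namespace TCS

/-- the continuous torus map -/
noncomputable def PhiC {n m : ℕ} (w : Fin n → Fin m → Circle) : Fin n → Sph m :=
  fun j => pt (w j)

lemma PhiC_cont {n m : ℕ} : Continuous (PhiC (n := n) (m := m)) :=
  continuous_pi fun j => pt_cont.comp (continuous_apply j)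

lemma toC_step {N : ℕ} [NeZero N] (v : ZMod N) :
    dist (ZMod.toCircle (v + 1) : Circle) (ZMod.toCircle v) =
      dist (ZMod.toCircle (1 : ZMod N) : Circle) 1 := by
  rw [circ_dist, circ_dist, AddChar.map_add_eq_mul, Circle.coe_mul, Circle.coe_one]
  have : ((ZMod.toCircle v : Circle) : ℂ) * (ZMod.toCircle (1 : ZMod N) : Circle) -
      (ZMod.toCircle v : Circle) =
      ((ZMod.toCircle v : Circle) : ℂ) * ((ZMod.toCircle (1 : ZMod N) : Circle) - 1) := by ring
  rw [this, norm_mul, Circle.norm_coe, one_mul]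

lemma vert_small {n m N L : ℕ} [NeZero N] {δ : ℝ} (hδ : 0 < δ)
    (h1 : dist (ZMod.toCircle (1 : ZMod N) : Circle) 1 < δ) (T : Simp n m N L) (i i' : ℕ) :
    dist (fun j k => (ZMod.toCircle (vert T i j k) : Circle))
      (fun j k => (ZMod.toCircle (vert T i' j k) : Circle)) < δ := by
  rw [dist_pi_lt_iff hδ]
  intro j
  rw [dist_pi_lt_iff hδ]
  intro k
  unfold vert
  split_ifs
  · rw [dist_self]; exact hδ
  · rw [add_zero, toC_step]; exact h1
  · rw [add_zero, dist_comm, toC_step]; exact h1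
  · rw [dist_self]; exact hδ

/-- every class on small simplices: the top power is a coboundary -/
lemma cobound {n m k : ℕ} (hn : 2 ≤ n) (hne : Even n) (hm : 1 ≤ m) (hk : k ≤ n)
    (H : HasSymPlanners (Sph m) n k) :
    ∃ δ > 0, ∃ t : (ℕ → (Fin n → Sph m)) → ZMod 2, Loc (m * n) t ∧
      Inv (permTuple (X := Sph m) (n := n)) t ∧
      ∀ x, Sm δ x → W m (fun _ => ys n m) n x = D (m * n) t x := by
  obtain ⟨U, hUo, hUc, hUi, hs⟩ := H
  obtain ⟨V, hVc, hVo, hVU⟩ := exists_iUnion_eq_closure_subset hUo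
    (fun x => Set.toFinite _) hUc
  set ε : ℝ := 1 / (2 * (m + 1)) with hεd
  have hε : 0 < ε := by positivity
  have hε2 : ((m : ℝ) + 1) * (2 * ε) ^ 2 ≤ 1 := by
    have hm1 : (0 : ℝ) < m + 1 := by positivity
    have : ((m : ℝ) + 1) * (2 * ε) ^ 2 = 1 / (m + 1) := by rw [hεd]; field_simp
    rw [this, div_le_one hm1]
    linarith [Nat.cast_nonneg (α := ℝ) m]
  have key : ∀ i, ∃ δ > 0, ∃ h : (ℕ → (Fin n → Sph m)) → ZMod 2, Loc m h ∧
      Inv (permTuple (X := Sph m) (n := n)) h ∧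
      ∀ x, Sm δ x → (∀ a, x a ∈ closure (V i)) → ys n m x = D m h x := by
    intro i
    obtain ⟨s, h0, h1, h2⟩ := hs i
    exact exists_h hne (xi_loc m) hε (fun x hx => xi_D hε2 x hx) (U i) (closure (V i))
      isClosed_closure.isCompact (hVU i) (hUi i) s h0 h1 h2
  choose d hd h hl hi hy using key
  obtain ⟨l, hl0, hleb⟩ := lebesgue_number_lemma_of_metric (isCompact_univ (X := Fin n → Sph m))
    hVo (by rw [hVc])
  obtain ⟨δ, ⟨⟨h1, h2⟩, h3⟩, h4⟩ : ∃ δ : ℝ, (((∀ i, δ < d i) ∧ δ < l) ∧ δ < ε) ∧ 0 < δ := by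
    have e : ∀ a : ℝ, 0 < a → ∀ᶠ δ in nhdsWithin (0 : ℝ) (Set.Ioi 0), δ < a := fun a ha =>
      Filter.mem_of_superset (Ioo_mem_nhdsGT ha) fun x hx => hx.2
    exact ((((Filter.eventually_all.2 fun i => e _ (hd i)).and (e _ hl0)).and (e _ hε)).and
      self_mem_nhdsWithin).exists
  let h' : ℕ → (ℕ → (Fin n → Sph m)) → ZMod 2 := fun j => if hj : j < k then h ⟨j, hj⟩ else 0
  have hl' : ∀ j, Loc m (h' j) := fun j => by
    by_cases hj : j < k
    · simp only [h', dif_pos hj]; exact hl _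
    · simp only [h', dif_neg hj]; intro x x' _; rfl
  have hi' : ∀ j, Inv (permTuple (X := Sph m) (n := n)) (h' j) := fun j => by
    by_cases hj : j < k
    · simp only [h', dif_pos hj]; exact hi _
    · simp only [h', dif_neg hj]; intro x x'; rfl
  obtain ⟨t, tl, ti, ht⟩ := telescoping (ε := δ) hm (ys_loc n m) hl' (ys_inv n m) hi'
    (fun x hx => ys_D hε2 x fun i j => (hx i j).trans h3) n (by omega)
  refine ⟨δ, h4, t, tl, ti, fun x hx => ?_⟩
  rw [← ht x hx]
  obtain ⟨i, hi⟩ := hleb (x 0) (Set.mem_univ _)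
  have hz : W m (fun j x => ys n m x + D m (h' j) x) n x = 0 := by
    refine prod_eq_zero (i := (i : ℕ)) (mem_range.2 (i.2.trans_le hk)) ?_
    have e : h' (i : ℕ) = h i := by simp only [h', dif_pos i.2]
    dsimp only
    rw [e, hy i (shift (m * i) x) (fun a b => (hx _ _).trans (h1 i)) fun a => subset_closure (hi ?_), two_add]
    exact Metric.mem_ball.2 ((hx _ _).trans h2)
  rw [hz, add_zero]

lemma lower {n m k : ℕ} (hn : 2 ≤ n) (hne : Even n) (hm : 1 < m) (hk : k ≤ n)
    (H : HasSymPlanners (Sph m) n k) : False := by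
  obtain ⟨δ, hδ, t, tl, ti, ht⟩ := cobound hn hne hm.le hk H
  obtain ⟨δ2, hδ2, hu⟩ := Metric.uniformContinuous_iff.1
    (CompactSpace.uniformContinuous_of_continuous (PhiC_cont (n := n) (m := m))) δ hδ
  have hm1 : (0 : ℝ) < 1 / (m + 1) := by positivity
  obtain ⟨M, hM, hf⟩ := fine (min δ2 (1 / (m + 1))) (lt_min hδ2 hm1)
  have : NeZero (2 * M) := ⟨by omega⟩
  have hf := hf inferInstance
  obtain ⟨L, hL⟩ : ∃ L, n * m = L + 1 := ⟨n * m - 1, by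
    have : 0 < n * m := by positivity
    omega⟩
  have hL' : m * n = L + 1 := by rw [mul_comm, hL]
  rw [hL'] at tl ht
  have e1 := top_eval hm.le hM hL (hf.trans_le (min_le_right _ _))
  have e2 := S_D (n := n) (m := m) (N := 2 * M) (L := L) hm
    (t := fun x => t (fun i => Phi (x i)))
    (fun x x' hx => tl _ _ fun i hi => by rw [hx i hi])
    (fun sp x => ti sp (fun i => Phi (x i)))
  have e3 : ∀ T : Simp n m (2 * M) L, W m (fun _ => ys n m) n (fun i => Phi (vert T i)) =
      D (L + 1) (fun x => t (fun i => Phi (x i))) (vert T) := by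
    intro T
    rw [ht (fun i => Phi (vert T i)) fun i i' => hu (vert_small hδ2 (hf.trans_le (min_le_left _ _)) T i i')]
    refine sum_congr rfl fun k _ => ?_
    congr 1; funext i; simp only [face]; split_ifs <;> rfl
  simp only [e3] at e1
  rw [e2] at e1
  exact zero_ne_one e1

end TCS


end TCSProof

/-- For every even `n ≥ 2` and every `m > 1`,
`TC^Σ_n(S^m) = n + 1`. -/
theorem TCsym_sphere_even_n (n m : ℕ) (hn : 2 ≤ n) (hne : Even n) (hm : 1 < m) :
    TCsym (Sph m) n = (n : ℕ∞) + 1 := by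
  apply le_antisymm
  · exact sInf_le ⟨n + 1, by push_cast; rfl, TCS.upper hm.le⟩
  · refine le_sInf ?_
    rintro _ ⟨k, rfl, hk⟩
    by_contra hlt
    refine TCS.lower hn hne hm ?_ hk
    by_contra hle
    apply hlt
    exact_mod_cast (by omega : n + 1 ≤ k)
end

section
/- For every even n ≥ 2 and every m = 2^e with e > 1, the n-th symmetrized topological complexity of real projective m-space equals nm+1: TC^Σ_n(ℝP^m) = nm+1. -/
open unitInterval

noncomputable section

/-- The antipodal setoid on the sphere `S^m`, identifying `x` with `-x`. -/
def antipodalSetoid (m : ℕ) : Setoid (Sph m) where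
  r x y := (x : EuclideanSpace ℝ (Fin (m + 1))) = (y : EuclideanSpace ℝ (Fin (m + 1))) ∨
    (x : EuclideanSpace ℝ (Fin (m + 1))) = -(y : EuclideanSpace ℝ (Fin (m + 1)))
  iseqv := by
    constructor
    · intro x; exact Or.inl rfl
    · intro x y h
      rcases h with h | h
      · exact Or.inl h.symm
      · exact Or.inr (by rw [h, neg_neg])
    · intro x y z h1 h2
      rcases h1 with h1 | h1 <;> rcases h2 with h2 | h2
      · exact Or.inl (h1.trans h2)
      · exact Or.inr (h1.trans h2)
      · exact Or.inr (by rw [h1, h2])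
      · exact Or.inl (by rw [h1, h2, neg_neg])

/-- Real projective `m`-space, the quotient of the unit sphere `S^m ⊂ ℝ^{m+1}`
by the antipodal involution. -/
def RP (m : ℕ) : Type := Quotient (antipodalSetoid m)

instance (m : ℕ) : TopologicalSpace (RP m) := instTopologicalSpaceQuotient

end

namespace TCP

/-- The order-preserving injection `ℕ → ℕ` that omits `i`. -/
def skip (i : ℕ) (k : ℕ) : ℕ := if k < i then k else k + 1

/-- Coboundary: from cochains of degree `K - 1` to cochains of degree `K`. -/
def dl {X : Type*} (K : ℕ) (φ : (ℕ → X) → ZMod 2) (p : ℕ → X) : ZMod 2 :=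
  ∑ i ∈ Finset.range (K + 1), φ (p ∘ skip i)

/-- `φ` only depends on the first `K` entries. -/
def Dep {X : Type*} (K : ℕ) (φ : (ℕ → X) → ZMod 2) : Prop :=
  ∀ p p' : ℕ → X, (∀ r < K, p r = p' r) → φ p = φ p'

/-- The cup product of the coboundaries of `s 0, …, s (K-1)`. -/
def Wc {X : Type*} (s : ℕ → X → ZMod 2) (K : ℕ) (p : ℕ → X) : ZMod 2 :=
  ∏ k ∈ Finset.range K, (s k (p k) + s k (p (k + 1)))

lemma two0 (x : ZMod 2) : x + x = 0 := CharTwo.add_self_eq_zero x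

lemma eq_of_add0 {x y : ZMod 2} (h : x + y = 0) : x = y := by
  revert x y; decide

lemma skip_lt {i k : ℕ} (h : k < i) : skip i k = k := by simp [skip, h]
lemma skip_ge {i k : ℕ} (h : i ≤ k) : skip i k = k + 1 := by simp [skip, not_lt.2 h]

lemma dep_Wc {X : Type*} (s : ℕ → X → ZMod 2) (K : ℕ) : Dep (K + 1) (Wc s K) := by
  intro p p' h
  unfold Wc
  refine Finset.prod_congr rfl fun k hk => ?_
  rw [Finset.mem_range] at hk
  rw [h k (by omega), h (k + 1) (by omega)]

lemma leib1 {X : Type*} (K : ℕ) (β : (ℕ → X) → ZMod 2) (hβ : Dep (K + 1) β) (u : X → ZMod 2)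
    (p : ℕ → X) :
    dl (K + 2) (fun p => β p * (u (p K) + u (p (K + 1)))) p
      = dl (K + 1) β p * (u (p (K + 1)) + u (p (K + 2))) := by
  unfold dl
  rw [Finset.sum_range_succ, Finset.sum_range_succ, Finset.sum_range_succ _ (K + 1), add_mul,
    Finset.sum_mul, add_assoc]
  congr 1
  · refine Finset.sum_congr rfl fun i hi => ?_
    rw [Finset.mem_range] at hi
    simp only [Function.comp]
    rw [skip_ge (by omega : i ≤ K), skip_ge (by omega : i ≤ K + 1)]
  · have e1 : β (p ∘ skip (K + 1)) = β p :=
      hβ _ _ fun r hr => by simp [skip_lt hr]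
    have e2 : β (p ∘ skip (K + 1 + 1)) = β p :=
      hβ _ _ fun r hr => by simp [skip_lt (by omega : r < K + 1 + 1)]
    beta_reduce
    rw [e1, e2]
    simp only [Function.comp]
    rw [skip_lt (by omega : K < K + 1), skip_ge (by omega : K + 1 ≤ K + 1),
      skip_lt (by omega : K < K + 1 + 1), skip_lt (by omega : K + 1 < K + 1 + 1)]
    have := two0 (β p * u (p K))
    linear_combination this

lemma leib2 {X : Type*} (K : ℕ) (A : (ℕ → X) → ZMod 2) (hA : Dep (K + 1) A)
    (hc : ∀ p, dl (K + 1) A p = 0) (t : X → ZMod 2) (p : ℕ → X) :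
    dl (K + 1) (fun p => A p * t (p K)) p = A p * (t (p K) + t (p (K + 1))) := by
  have h := hc p
  unfold dl at h ⊢
  rw [Finset.sum_range_succ] at h ⊢
  have e1 : A (p ∘ skip (K + 1)) = A p := hA _ _ fun r hr => by simp [skip_lt hr]
  beta_reduce
  rw [e1] at h ⊢
  have e2 : ∑ i ∈ Finset.range (K + 1), A (p ∘ skip i) * t ((p ∘ skip i) K)
      = (∑ i ∈ Finset.range (K + 1), A (p ∘ skip i)) * t (p (K + 1)) := by
    rw [Finset.sum_mul]
    refine Finset.sum_congr rfl fun i hi => ?_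
    rw [Finset.mem_range] at hi
    simp only [Function.comp]
    rw [skip_ge (by omega : i ≤ K)]
  rw [e2, eq_of_add0 h]
  simp only [Function.comp]
  rw [skip_lt (by omega : K < K + 1)]
  ring

lemma Wc_succ {X : Type*} (s : ℕ → X → ZMod 2) (K : ℕ) (p : ℕ → X) :
    Wc s (K + 1) p = Wc s K p * (s K (p K) + s K (p (K + 1))) := by
  simp [Wc, Finset.prod_range_succ]

lemma dl_Wc {X : Type*} (s : ℕ → X → ZMod 2) (K : ℕ) (p : ℕ → X) :
    dl (K + 1) (Wc s K) p = 0 := by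
  induction K generalizing p with
  | zero => simp [dl, Wc]; exact two0 1
  | succ K ih =>
    have := leib1 K (Wc s K) (dep_Wc s K) (s K) p
    rw [ih, zero_mul] at this
    rw [← this]
    congr 1
    funext p
    exact Wc_succ s K p

lemma Wc_eq_dl {X : Type*} (s : ℕ → X → ZMod 2) (K : ℕ) (p : ℕ → X) :
    dl (K + 1) (fun p => Wc s K p * s K (p K)) p = Wc s (K + 1) p := by
  rw [leib2 K _ (dep_Wc s K) (dl_Wc s K), Wc_succ]

lemma dl_add {X : Type*} (K : ℕ) (φ ψ : (ℕ → X) → ZMod 2) (p : ℕ → X) :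
    dl K (fun p => φ p + ψ p) p = dl K φ p + dl K ψ p := by
  simp [dl, Finset.sum_add_distrib]

/-- Independence of the cup product of the chosen functions, up to an invariant coboundary. -/
lemma cobound {X : Type*} (𝒢 : Set (X → X)) (s s' : ℕ → X → ZMod 2)
    (h : ∀ g ∈ 𝒢, ∃ ε : ZMod 2, ∀ k x, s k (g x) = s k x + ε ∧ s' k (g x) = s' k x + ε)
    (K : ℕ) :
    ∃ β : (ℕ → X) → ZMod 2, Dep (K + 1) β ∧ (∀ g ∈ 𝒢, ∀ p, β (g ∘ p) = β p) ∧
      ∀ p, Wc s (K + 1) p + Wc s' (K + 1) p = dl (K + 1) β p := by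
  have hw : ∀ g ∈ 𝒢, ∀ k x y, s k (g x) + s k (g y) = s k x + s k y := by
    intro g hg k x y
    obtain ⟨ε, hε⟩ := h g hg
    rw [(hε k x).1, (hε k y).1]
    linear_combination two0 ε
  have hw' : ∀ g ∈ 𝒢, ∀ k x y, s' k (g x) + s' k (g y) = s' k x + s' k y := by
    intro g hg k x y
    obtain ⟨ε, hε⟩ := h g hg
    rw [(hε k x).2, (hε k y).2]
    linear_combination two0 ε
  have ht : ∀ g ∈ 𝒢, ∀ k x, s k (g x) + s' k (g x) = s k x + s' k x := by
    intro g hg k x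
    obtain ⟨ε, hε⟩ := h g hg
    rw [(hε k x).1, (hε k x).2]
    linear_combination two0 ε
  induction K with
  | zero =>
    refine ⟨fun p => s 0 (p 0) + s' 0 (p 0), ?_, ?_, ?_⟩
    · intro p p' hp
      simp [hp 0 (by omega)]
    · intro g hg p
      exact ht g hg 0 (p 0)
    · intro p
      simp [Wc, dl, Finset.sum_range_succ, skip]
      ring
  | succ K ih =>
    obtain ⟨β, h1, h2, h3⟩ := ih
    refine ⟨fun p => β p * (s (K + 1) (p K) + s (K + 1) (p (K + 1))) +
      Wc s' (K + 1) p * (s (K + 1) (p (K + 1)) + s' (K + 1) (p (K + 1))), ?_, ?_, ?_⟩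
    · intro p p' hp
      simp only
      rw [h1 p p' fun r hr => hp r (by omega), dep_Wc s' (K + 1) p p' hp, hp K (by omega),
        hp (K + 1) (by omega)]
    · intro g hg p
      simp only [Function.comp]
      rw [hw g hg, ht g hg]
      have e1 := h2 g hg p
      have e2 : Wc s' (K + 1) (g ∘ p) = Wc s' (K + 1) p := by
        unfold Wc
        exact Finset.prod_congr rfl fun k _ => hw' g hg k _ _
      rw [e1, e2]
    · intro p
      rw [dl_add, leib1 K β h1, leib2 (K + 1) _ (dep_Wc s' (K + 1)) (dl_Wc s' (K + 1))
        (fun x => s (K + 1) x + s' (K + 1) x), ← h3, Wc_succ, Wc_succ s' (K + 1)]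
      linear_combination (-Wc s' (K + 1) p) * two0 (s (K + 1) (p (K + 1)) + s (K + 1) (p (K + 2)))

end TCP

namespace TCP

lemma prism_sum (d : ℕ) (A B : ℕ → ℕ → ZMod 2) (H : ℕ → ZMod 2)
    (h1 : ∀ i r, i ≤ d → r < i → A i r = B (i - 1) r) (h2 : ∀ i, i ≤ d → A i i = H i)
    (h3 : ∀ i, i ≤ d → A i (i + 1) = H (i + 1))
    (h4 : ∀ i r, i ≤ d → i + 1 < r → r ≤ d + 1 → A i r = B i (r - 1)) :
    ∑ i ∈ Finset.range (d + 1), ∑ r ∈ Finset.range (d + 2), A i r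
      = H 0 + H (d + 1) + ∑ i ∈ Finset.range d, ∑ r ∈ Finset.range (d + 1), B i r := by
  have e : ∀ i ∈ Finset.range (d + 1), ∑ r ∈ Finset.range (d + 2), A i r
      = (H i + H (i + 1)) + (∑ r ∈ Finset.range i, B (i - 1) r
        + ∑ r ∈ Finset.Ico (i + 1) (d + 1), B i r) := by
    intro i hi
    have hi : i ≤ d := by rw [Finset.mem_range] at hi; omega
    rw [Finset.range_eq_Ico, ← Finset.sum_Ico_consecutive (A i) (Nat.zero_le i) (by omega : i ≤ d + 2),
      Finset.sum_eq_sum_Ico_succ_bot (by omega : i < d + 2),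
      Finset.sum_eq_sum_Ico_succ_bot (by omega : i + 1 < d + 2), h2 i hi, h3 i hi,
      ← Finset.range_eq_Ico, ← Finset.sum_Ico_add' (A i) (i + 1) (d + 1) 1,
      Finset.sum_congr rfl (fun r hr => h1 i r hi (Finset.mem_range.1 hr))]
    have : ∑ x ∈ Finset.Ico (i + 1) (d + 1), A i (x + 1) = ∑ r ∈ Finset.Ico (i + 1) (d + 1), B i r := by
      refine Finset.sum_congr rfl fun r hr => ?_
      rw [Finset.mem_Ico] at hr
      rw [h4 i (r + 1) hi (by omega) (by omega)]
      simp
    rw [this]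
    ring
  rw [Finset.sum_congr rfl e, Finset.sum_add_distrib,
    Finset.sum_add_distrib (f := fun i => ∑ r ∈ Finset.range i, B (i - 1) r),
    Finset.sum_range_succ' (fun i => ∑ r ∈ Finset.range i, B (i - 1) r),
    Finset.sum_range_succ (fun i => ∑ r ∈ Finset.Ico (i + 1) (d + 1), B i r)]
  have t : ∀ k, ∑ i ∈ Finset.range k, (H i + H (i + 1)) = H 0 + H k := by
    intro k
    induction k with
    | zero => simp [two0]
    | succ k ih =>
      rw [Finset.sum_range_succ, ih]
      linear_combination two0 (H k)
  rw [t]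
  congr 1
  simp only [Finset.range_zero, Finset.sum_empty, Finset.Ico_self, add_zero, Nat.add_sub_cancel]
  rw [← Finset.sum_add_distrib]
  refine Finset.sum_congr rfl fun i hi => ?_
  rw [Finset.mem_range] at hi
  rw [Finset.range_eq_Ico, Finset.range_eq_Ico, Finset.sum_Ico_consecutive _ (by omega) (by omega)]

/-- The `i`-th simplex of the prism between `f ∘ p` and `g ∘ p`. -/
def Pr {X : Type*} (f g : X → X) (i : ℕ) (p : ℕ → X) (r : ℕ) : X :=
  if r ≤ i then f (p r) else g (p (r - 1))

lemma prism {X : Type*} (f g : X → X) (d : ℕ) (φ : (ℕ → X) → ZMod 2) (hφ : Dep (d + 1) φ)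
    (p : ℕ → X) :
    ∑ i ∈ Finset.range (d + 1), dl (d + 1) φ (Pr f g i p)
      = φ (g ∘ p) + φ (f ∘ p) + ∑ i ∈ Finset.range d, dl d (fun p => φ (Pr f g i p)) p := by
  unfold dl
  rw [prism_sum d (fun i r => φ (Pr f g i p ∘ skip r)) (fun i r => φ (Pr f g i (p ∘ skip r)))
    (fun i => φ (fun r => if r < i then f (p r) else g (p r)))]
  · congr 1
    have e : φ (fun r => if r < d + 1 then f (p r) else g (p r)) = φ (f ∘ p) :=
      hφ _ _ fun r hr => by simp [hr]
    rw [e]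
    rfl
  · intro i r hi hr
    beta_reduce
    congr 1
    funext k
    simp only [Function.comp, Pr, skip]
    split_ifs <;> first | rfl | omega | (congr 2; omega)
  · intro i hi
    beta_reduce
    congr 1
    funext k
    simp only [Function.comp, Pr, skip]
    split_ifs <;> first | rfl | omega | (congr 2; omega)
  · intro i hi
    beta_reduce
    congr 1
    funext k
    simp only [Function.comp, Pr, skip]
    split_ifs <;> first | rfl | omega | (congr 2; omega)
  · intro i r hi hr hr'
    beta_reduce
    congr 1
    funext k
    simp only [Function.comp, Pr, skip]
    split_ifs <;> first | rfl | omega | (congr 2; omega)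

/-- One suspension step. -/
lemma susp {X : Type*} (τ : X → X) (f : ℕ → X → X) (L d : ℕ) (q : X)
    {ι : Type} [Fintype ι] (ς : ι → ℕ → X)
    (h0 : ∀ a r, f 0 (ς a r) = ς a r) (h0' : ∀ a r, f 0 (τ (ς a r)) = τ (ς a r))
    (hL : ∀ a r, f L (ς a r) = q) (hL' : ∀ a r, f L (τ (ς a r)) = q)
    (h3 : 0 < d → ∀ φ : (ℕ → X) → ZMod 2, Dep d φ → 
      ∑ a, (dl d φ (ς a) + dl d φ (τ ∘ ς a)) = 0)
    (φ : (ℕ → X) → ZMod 2) (hφ : Dep (d + 1) φ) :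
    ∑ x : ι × Bool × Fin L × Fin (d + 1), 
      dl (d + 1) φ (Pr (f x.2.2.1) (f (x.2.2.1 + 1)) x.2.2.2 (if x.2.1 then τ ∘ ς x.1 else ς x.1))
      = ∑ a, (φ (ς a) + φ (τ ∘ ς a)) := by
  have key : ∀ p : ℕ → X, ∑ l : Fin L, ∑ i : Fin (d + 1), dl (d + 1) φ (Pr (f l) (f (l + 1)) i p)
      = φ (f 0 ∘ p) + φ (f L ∘ p) + 
        ∑ l ∈ Finset.range L, ∑ i ∈ Finset.range d, dl d (fun p => φ (Pr (f l) (f (l + 1)) i p)) p := by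
    intro p
    have t : ∀ k, ∑ l ∈ Finset.range k, (φ (f (l + 1) ∘ p) + φ (f l ∘ p)) 
        = φ (f 0 ∘ p) + φ (f k ∘ p) := by
      intro k
      induction k with
      | zero => simp [two0]
      | succ k ih =>
        rw [Finset.sum_range_succ, ih]
        linear_combination two0 (φ (f k ∘ p))
    rw [← t, ← Finset.sum_add_distrib, ← Fin.sum_univ_eq_sum_range (fun l => φ (f (l + 1) ∘ p) + φ (f l ∘ p) + 
      ∑ i ∈ Finset.range d, dl d (fun p => φ (Pr (f l) (f (l + 1)) i p)) p)]
    refine Finset.sum_congr rfl fun l _ => ?_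
    rw [← prism _ _ d φ hφ, ← Fin.sum_univ_eq_sum_range (fun i => dl (d + 1) φ (Pr (f l) (f (l + 1)) i p))]
  rw [Fintype.sum_prod_type]
  simp only [Fintype.sum_prod_type, Fintype.sum_bool, if_true, Bool.false_eq_true, if_false]
  simp only [key]
  have g1 : ∀ a, f 0 ∘ ς a = ς a := fun a => funext (h0 a)
  have g2 : ∀ a, f 0 ∘ τ ∘ ς a = τ ∘ ς a := fun a => funext (h0' a)
  have g3 : ∀ a, f L ∘ ς a = fun _ => q := fun a => funext (hL a)
  have g4 : ∀ a, f L ∘ τ ∘ ς a = fun _ => q := fun a => funext (hL' a)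
  simp only [g1, g2, g3, g4]
  have z : ∑ a, ((∑ l ∈ Finset.range L, ∑ i ∈ Finset.range d, 
        dl d (fun p => φ (Pr (f l) (f (l + 1)) i p)) (ς a)) + 
      ∑ l ∈ Finset.range L, ∑ i ∈ Finset.range d, 
        dl d (fun p => φ (Pr (f l) (f (l + 1)) i p)) (τ ∘ ς a)) = 0 := by
    simp only [← Finset.sum_add_distrib]
    rw [Finset.sum_comm]
    refine Finset.sum_eq_zero fun l _ => ?_
    rw [Finset.sum_comm]
    refine Finset.sum_eq_zero fun i hi => ?_
    rw [Finset.mem_range] at hi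
    refine h3 (by omega) _ fun p p' hp => hφ _ _ fun r hr => ?_
    unfold Pr
    split_ifs
    · rw [hp r (by omega)]
    · rw [hp (r - 1) (by omega)]
  rw [← add_zero (∑ a, (φ (ς a) + φ (τ ∘ ς a))), ← z, ← Finset.sum_add_distrib]
  refine Finset.sum_congr rfl fun a _ => ?_
  linear_combination two0 (φ fun _ => q)

end TCP

namespace TCP
noncomputable section

abbrev S (m : ℕ) : Type := Metric.sphere (0 : EuclideanSpace ℝ (Fin (m + 1))) 1

lemma rot_norm {m : ℕ} (θ : ℝ) (k : Fin (m + 1)) (y : S m) (h : y.1 k = 0) :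
    Real.cos θ • y.1 + Real.sin θ • EuclideanSpace.single k (1 : ℝ) ∈
      Metric.sphere (0 : EuclideanSpace ℝ (Fin (m + 1))) 1 := by
  rw [mem_sphere_zero_iff_norm]
  have hy : ‖y.1‖ = 1 := mem_sphere_zero_iff_norm.1 y.2
  have : ‖Real.cos θ • y.1 + Real.sin θ • EuclideanSpace.single k (1 : ℝ)‖ ^ 2 = 1 := by
    rw [norm_add_sq_real, norm_smul, norm_smul, hy, EuclideanSpace.norm_single, inner_smul_left,
      inner_smul_right, EuclideanSpace.inner_single_right, h]
    simp
  nlinarith [norm_nonneg (Real.cos θ • y.1 + Real.sin θ • EuclideanSpace.single k (1 : ℝ))]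

/-- Rotation of the equator `y k = 0` towards the pole `e_k`. -/
def rot {m : ℕ} (k : Fin (m + 1)) (θ : ℝ) (y : S m) : S m :=
  if h : y.1 k = 0 then ⟨_, rot_norm θ k y h⟩ else y

lemma rot_coe {m : ℕ} (k : Fin (m + 1)) (θ : ℝ) (y : S m) (h : y.1 k = 0) :
    (rot k θ y).1 = Real.cos θ • y.1 + Real.sin θ • EuclideanSpace.single k (1 : ℝ) := by
  simp [rot, h]

lemma rot_dist {m : ℕ} (k : Fin (m + 1)) (θ θ' : ℝ) (y y' : S m) (h : y.1 k = 0) (h' : y'.1 k = 0) :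
    dist (rot k θ y) (rot k θ' y') ≤ dist y y' + 2 * |θ - θ'| := by
  rw [Subtype.dist_eq, Subtype.dist_eq, rot_coe k θ y h, rot_coe k θ' y' h', dist_eq_norm, dist_eq_norm]
  have e : Real.cos θ • y.1 + Real.sin θ • EuclideanSpace.single k (1 : ℝ) -
      (Real.cos θ' • y'.1 + Real.sin θ' • EuclideanSpace.single k (1 : ℝ))
      = Real.cos θ • (y.1 - y'.1) + ((Real.cos θ - Real.cos θ') • y'.1 +
        (Real.sin θ - Real.sin θ') • EuclideanSpace.single k (1 : ℝ)) := by
    module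
  have hy' : ‖y'.1‖ = 1 := mem_sphere_zero_iff_norm.1 y'.2
  have c1 : |Real.cos θ - Real.cos θ'| ≤ |θ - θ'| := by
    have := Real.lipschitzWith_cos.dist_le_mul θ θ'
    simpa [Real.dist_eq] using this
  have c2 : |Real.sin θ - Real.sin θ'| ≤ |θ - θ'| := by
    have := Real.lipschitzWith_sin.dist_le_mul θ θ'
    simpa [Real.dist_eq] using this
  rw [e]
  calc _ ≤ ‖Real.cos θ • (y.1 - y'.1)‖ + (‖(Real.cos θ - Real.cos θ') • y'.1‖ +
        ‖(Real.sin θ - Real.sin θ') • EuclideanSpace.single k (1 : ℝ)‖) :=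
        (norm_add_le _ _).trans (add_le_add le_rfl (norm_add_le _ _))
    _ ≤ _ := by
        rw [norm_smul, norm_smul, norm_smul, hy', EuclideanSpace.norm_single]
        simp only [Real.norm_eq_abs, norm_one, mul_one]
        have := mul_le_mul_of_nonneg_right (Real.abs_cos_le_one θ) (norm_nonneg (y.1 - y'.1))
        linarith

lemma sphere_chain (m : ℕ) (u : S m → ZMod 2) (hu : ∀ y, u (-y) = u y + 1) (k : ℕ) (hk : k ≤ m) :
    ∀ ε : ℝ, 0 < ε → ∃ (ι : Type) (_ : Fintype ι) (ς : ι → ℕ → S m),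
      (∀ a r (l : Fin (m + 1)), k < (l : ℕ) → (ς a r).1 l = 0) ∧
      (∀ a r r', dist (ς a r) (ς a r') < ε) ∧
      (0 < k → ∀ φ : (ℕ → S m) → ZMod 2, Dep k φ → (∀ p, φ (Neg.neg ∘ p) = φ p) →
        ∑ a, dl k φ (ς a) = 0) ∧
      ∑ a, Wc (fun _ => u) k (ς a) = 1 := by
  induction k with
  | zero =>
    intro ε hε
    refine ⟨Unit, inferInstance, fun _ _ => ⟨EuclideanSpace.single 0 1, by simp⟩, ?_, ?_, ?_, ?_⟩
    · intro a r l hl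
      have : l ≠ 0 := by rintro rfl; simp at hl
      simp [this]
    · intro a r r'
      simpa using hε
    · intro h; omega
    · simp [Wc]
  | succ k ih =>
    intro ε hε
    obtain ⟨ι, _, ς, h1, h2, h3, h4⟩ := ih (by omega) (ε / 2) (by linarith)
    obtain ⟨L, hL⟩ := exists_nat_gt (2 * Real.pi / ε)
    have hL0 : (0 : ℝ) < L := lt_trans (by positivity) hL
    let kk : Fin (m + 1) := ⟨k + 1, by omega⟩
    let f : ℕ → S m → S m := fun l => rot kk (l * (Real.pi / 2 / L))
    let q : S m := ⟨EuclideanSpace.single kk 1, by simp⟩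
    have hz : ∀ a r, (ς a r).1 kk = 0 := fun a r => h1 a r kk (by simp [kk])
    have hz' : ∀ a r, (-(ς a r)).1 kk = 0 := fun a r => by simp [hz a r]
    have main := susp (X := S m) Neg.neg f L k q ς
      (by intro a r
          apply Subtype.ext
          simp only [f]
          rw [rot_coe _ _ _ (hz a r)]
          simp)
      (by intro a r
          apply Subtype.ext
          simp only [f]
          rw [rot_coe _ _ _ (hz' a r)]
          simp)
      (by intro a r
          apply Subtype.ext
          simp only [f]
          rw [rot_coe _ _ _ (hz a r), mul_div_cancel₀ _ hL0.ne']
          simp [q])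
      (by intro a r
          apply Subtype.ext
          simp only [f]
          rw [rot_coe _ _ _ (hz' a r), mul_div_cancel₀ _ hL0.ne']
          simp [q])
      (by intro hk0 φ hφ
          have := h3 hk0 (fun p => φ p + φ (Neg.neg ∘ p))
            (fun p p' hp => by
              have e1 := hφ p p' hp
              have e2 := hφ (Neg.neg ∘ p) (Neg.neg ∘ p') fun r hr => by simp [hp r hr]
              simp only [e1, e2])
            (fun p => by
              have : Neg.neg ∘ Neg.neg ∘ p = p := by funext r; simp
              simp only [this]
              ring)
          rw [← this]
          refine Finset.sum_congr rfl fun a _ => ?_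
          rw [dl_add]
          rfl)
    refine ⟨ι × Bool × Fin L × Fin (k + 1), inferInstance,
      fun x => Pr (f x.2.2.1) (f (x.2.2.1 + 1)) x.2.2.2
        (if x.2.1 then Neg.neg ∘ ς x.1 else ς x.1), ?_, ?_, ?_, ?_⟩
    · rintro ⟨a, b, l, i⟩ r j hj
      have hjk : kk ≠ j := by rintro rfl; simp [kk] at hj
      have hb : ∀ r, ((if b then Neg.neg ∘ ς a else ς a) r).1 kk = 0 ∧
          ((if b then Neg.neg ∘ ς a else ς a) r).1 j = 0 := by
        intro r
        have := h1 a r j (by omega)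
        cases b
        · exact ⟨hz a r, this⟩
        · refine ⟨hz' a r, ?_⟩
          simp [this]
      beta_reduce
      dsimp only
      generalize (if b = true then Neg.neg ∘ ς a else ς a) = p at hb ⊢
      simp only [Pr]
      split_ifs
      · simp only [f]
        rw [rot_coe _ _ _ (hb _).1]
        simp [(hb _).2, hjk]
      · simp only [f]
        rw [rot_coe _ _ _ (hb _).1]
        simp [(hb _).2, hjk]
    · rintro ⟨a, b, l, i⟩ r r'
      have hb : ∀ r, ((if b then Neg.neg ∘ ς a else ς a) r).1 kk = 0 := by
        intro r
        cases b
        · exact hz a r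
        · exact hz' a r
      have hd : ∀ r r', dist ((if b then Neg.neg ∘ ς a else ς a) r)
          ((if b then Neg.neg ∘ ς a else ς a) r') < ε / 2 := by
        intro r r'
        cases b
        · exact h2 a r r'
        · have := h2 a r r'
          rw [Subtype.dist_eq] at this ⊢
          simpa [dist_neg_neg] using this
      beta_reduce
      dsimp only
      generalize (if b = true then Neg.neg ∘ ς a else ς a) = p at hb hd ⊢
      have hst : 2 * (Real.pi / 2 / L) < ε / 2 := by
        rw [div_lt_iff₀ hε] at hL
        rw [show 2 * (Real.pi / 2 / L) = Real.pi / L by ring, div_lt_iff₀ hL0]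
        linarith
      have hpos : 0 < Real.pi / 2 / L := by positivity
      have hl1 : ∀ s s' : ℕ, (s = l ∨ s = l + 1) → (s' = l ∨ s' = l + 1) →
          |(s : ℝ) * (Real.pi / 2 / L) - s' * (Real.pi / 2 / L)| ≤ Real.pi / 2 / L := by
        intro s s' hs hs'
        rw [← sub_mul, abs_mul, abs_of_pos hpos]
        have : |(s : ℝ) - s'| ≤ 1 := by
          rcases hs with rfl | rfl <;> rcases hs' with rfl | rfl <;> simp
        nlinarith
      have key : ∀ s s' : ℕ, (s = l ∨ s = l + 1) → (s' = l ∨ s' = l + 1) → ∀ r r',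
          dist (f s (p r)) (f s' (p r')) < ε := by
        intro s s' hs hs' r r'
        have := rot_dist kk (s * (Real.pi / 2 / L)) (s' * (Real.pi / 2 / L)) _ _ (hb r) (hb r')
        have h5 := hl1 s s' hs hs'
        have h6 := hd r r'
        simp only [f]
        linarith
      simp only [Pr]
      split_ifs <;> exact key _ _ (by simp) (by simp) _ _
    · intro _ φ hφ hinv
      rw [main φ hφ]
      exact Finset.sum_eq_zero fun a _ => by rw [hinv, two0]
    · have := main (fun p => Wc (fun _ => u) k p * u (p k)) (by
        intro p p' hp
        have e := dep_Wc (fun _ => u) k p p' hp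
        simp only [e, hp k (by omega)])
      rw [← h4]
      simp only [fun p => (Wc_eq_dl (fun _ => u) k p)] at this
      rw [this]
      refine Finset.sum_congr rfl fun a _ => ?_
      have e : Wc (fun _ => u) k (Neg.neg ∘ ς a) = Wc (fun _ => u) k (ς a) := by
        unfold Wc
        refine Finset.prod_congr rfl fun r _ => ?_
        simp only [Function.comp, hu]
        linear_combination two0 1
      rw [e]
      simp only [Function.comp, hu]
      linear_combination two0 (Wc (fun _ => u) k (ς a) * u (ς a k))

end
end TCP

namespace TCP
noncomputable section

/-- Words of length `K` in the letters `Fin n`. -/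
abbrev Word (n K : ℕ) : Type := Fin K → Fin n

open Classical in
/-- Indicator that the `t`-th letter of `q` is `j`. -/
def ind {n K : ℕ} (q : Word n K) (j : Fin n) (t : ℕ) : ℕ :=
  if ∃ h : t < K, q ⟨t, h⟩ = j then 1 else 0

/-- Number of letters `j` among the first `k` letters of `q`. -/
def cnt {n K : ℕ} (q : Word n K) (j : Fin n) (k : ℕ) : ℕ := ∑ t ∈ Finset.range k, ind q j t

/-- Every letter occurs exactly `m` times. -/
def OK {n K : ℕ} (m : ℕ) (q : Word n K) : Prop := ∀ j, cnt q j K = m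

lemma cnt_zero {n K : ℕ} (q : Word n K) (j : Fin n) : cnt q j 0 = 0 := rfl

lemma cnt_succ {n K : ℕ} (q : Word n K) (j : Fin n) (k : ℕ) :
    cnt q j (k + 1) = cnt q j k + ind q j k := Finset.sum_range_succ _ _

lemma ind_lt {n K : ℕ} (q : Word n K) (j : Fin n) (t : ℕ) (h : t < K) :
    ind q j t = if q ⟨t, h⟩ = j then 1 else 0 := by
  simp [ind, h]

lemma ind_ge {n K : ℕ} (q : Word n K) (j : Fin n) (t : ℕ) (h : K ≤ t) : ind q j t = 0 := by
  simp [ind, not_lt.2 h]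

lemma cnt_mono {n K : ℕ} (q : Word n K) (j : Fin n) {a b : ℕ} (h : a ≤ b) :
    cnt q j a ≤ cnt q j b :=
  Finset.sum_le_sum_of_subset (Finset.range_mono h)

lemma ind_smul {n K : ℕ} (g : Equiv.Perm (Fin n)) (q : Word n K) (j : Fin n) (t : ℕ) :
    ind (g • q) (g j) t = ind q j t := by
  simp [ind]

lemma cnt_smul {n K : ℕ} (g : Equiv.Perm (Fin n)) (q : Word n K) (j : Fin n) (t : ℕ) :
    cnt (g • q) (g j) t = cnt q j t := by
  simp [cnt, ind_smul]

lemma OK_smul {n K : ℕ} (m : ℕ) (g : Equiv.Perm (Fin n)) (q : Word n K) :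
    OK m (g • q) ↔ OK m q := by
  constructor
  · intro h j
    rw [← cnt_smul g]; exact h _
  · intro h j
    obtain ⟨i, rfl⟩ := g.surjective j
    rw [cnt_smul]; exact h _

lemma ind_insert {n K : ℕ} (p : Fin (K + 1)) (j : Fin n) (q : Word n K) (j' : Fin n) (t : ℕ) :
    ind (p.insertNth j q : Word n (K + 1)) j' t =
      if t < p then ind q j' t else if t = p then (if j = j' then 1 else 0)
        else ind q j' (t - 1) := by
  by_cases ht : t < K + 1
  · rw [ind_lt _ _ _ ht]
    obtain h | h := Fin.eq_self_or_eq_succAbove p ⟨t, ht⟩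
    · rw [h]
      have : t = p := by rw [← h]
      simp [this]
    · obtain ⟨s, hs⟩ := h
      rw [hs, Fin.insertNth_apply_succAbove]
      have e : t = (p.succAbove s : ℕ) := by rw [← hs]
      by_cases h1 : s.castSucc < p
      · rw [Fin.succAbove_of_castSucc_lt _ _ h1] at e
        simp at e
        have h2 : t < p := by rw [e]; exact h1
        rw [if_pos h2, ind_lt _ _ _ (by omega)]
        simp [e]
      · rw [not_lt] at h1
        rw [Fin.succAbove_of_le_castSucc _ _ h1] at e
        simp at e
        have h2 : (p : ℕ) ≤ s := h1
        rw [if_neg (by omega : ¬ t < p), if_neg (by omega : ¬ t = p), ind_lt _ _ _ (by omega)]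
        simp [e]
  · have := p.2
    rw [ind_ge _ _ _ (by omega), if_neg (by omega : ¬ t < p), if_neg (by omega : ¬ t = p), ind_ge _ _ _ (by omega)]

lemma cnt_insert_le {n K : ℕ} (p : Fin (K + 1)) (j : Fin n) (q : Word n K) (j' : Fin n) (k : ℕ)
    (h : k ≤ p) : cnt (p.insertNth j q : Word n (K + 1)) j' k = cnt q j' k := by
  refine Finset.sum_congr rfl fun t ht => ?_
  rw [Finset.mem_range] at ht
  rw [ind_insert, if_pos (by omega)]

lemma cnt_insert_ge {n K : ℕ} (p : Fin (K + 1)) (j : Fin n) (q : Word n K) (j' : Fin n) (k : ℕ)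
    (h : p ≤ k) : cnt (p.insertNth j q : Word n (K + 1)) j' (k + 1)
      = cnt q j' k + if j = j' then 1 else 0 := by
  induction k, h using Nat.le_induction with
  | base => rw [cnt_succ, cnt_insert_le _ _ _ _ _ le_rfl, ind_insert]; simp
  | succ k hk ih =>
    rw [cnt_succ, ih, ind_insert, cnt_succ q, if_neg (by omega : ¬ k + 1 < p),
      if_neg (by omega : ¬ k + 1 = p)]
    simp; ring

lemma OK_insert {n K : ℕ} (m : ℕ) (p : Fin (K + 1)) (j : Fin n) (q : Word n K) :
    OK m (p.insertNth j q : Word n (K + 1)) ↔ ∀ j', cnt q j' K + (if j = j' then 1 else 0) = m := by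
  unfold OK
  simp only [cnt_insert_ge p j q _ K (by have := p.2; omega)]

lemma sum_ind {n K : ℕ} (q : Word n K) (j : Fin n) (g : ℕ → ZMod 2) (k : ℕ) :
    ∑ t ∈ Finset.range k, (if ind q j t = 1 then g (cnt q j (t + 1)) else 0)
      = ∑ r ∈ Finset.range (cnt q j k), g (r + 1) := by
  induction k with
  | zero => simp [cnt_zero]
  | succ k ih =>
    rw [Finset.sum_range_succ, ih, cnt_succ]
    split_ifs with h
    · rw [h, Finset.sum_range_succ]
    · have : ind q j k = 0 := by
        unfold ind at h ⊢
        split_ifs at h ⊢ <;> simp_all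
      rw [this]; simp

instance orbFintype (G : Type*) [Group G] (α : Type*) [MulAction G α] [Finite α] :
    Fintype (Quotient (MulAction.orbitRel G α)) := Fintype.ofFinite _

/-- Sum over orbits of a finite group action. -/
def osum (G : Type*) [Group G] {α : Type*} [MulAction G α] [Finite α] (F : α → ZMod 2) : ZMod 2 :=
  ∑ x : Quotient (MulAction.orbitRel G α), F (Quotient.out x)

section
variable {G : Type*} [Group G] {α : Type*} [MulAction G α] [Finite α]

lemma out_mk (F : α → ZMod 2) (hF : ∀ (g : G) x, F (g • x) = F x) (a : α) :
    F (Quotient.out (Quotient.mk (MulAction.orbitRel G α) a)) = F a := by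
  have h : (MulAction.orbitRel G α) (Quotient.out (Quotient.mk (MulAction.orbitRel G α) a)) a :=
    Quotient.exact (Quotient.out_eq _)
  obtain ⟨g, hg⟩ := h
  rw [← hg]; exact hF g a

lemma osum_equiv {β : Type*} [MulAction G β] [Finite β] (e : α ≃ β)
    (he : ∀ (g : G) x, e (g • x) = g • e x)
    (F : β → ZMod 2) (hF : ∀ (g : G) x, F (g • x) = F x) :
    osum G (fun a => F (e a)) = osum G F := by
  unfold osum
  refine Fintype.sum_equiv (Quotient.congr e ?_) _ _ ?_
  · intro a b
    constructor
    · rintro ⟨g, hg⟩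
      exact ⟨g, by simp only at hg ⊢; rw [← hg, he]⟩
    · rintro ⟨g, hg⟩
      exact ⟨g, by simp only at hg ⊢; apply e.injective; rw [← hg, he]⟩
  · intro x
    induction x using Quotient.inductionOn with
    | h a =>
      exact (out_mk (G := G) (fun a => F (e a)) (fun g x => by rw [he, hF]) a).trans
        (out_mk (G := G) F hF (e a)).symm

lemma osum_sum {ι : Type*} (s : Finset ι) (F : ι → α → ZMod 2) :
    osum G (fun a => ∑ i ∈ s, F i a) = ∑ i ∈ s, osum G (F i) := by
  unfold osum
  rw [Finset.sum_comm]

lemma osum_add (F F' : α → ZMod 2) :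
    osum G (fun a => F a + F' a) = osum G F + osum G F' := by
  unfold osum
  rw [Finset.sum_add_distrib]

lemma osum_zero (F : α → ZMod 2) (h : ∀ a, F a = 0) : osum G F = 0 := by
  unfold osum
  exact Finset.sum_eq_zero fun _ _ => h _

lemma osum_inv (T : α → α) (hT : ∀ a, T (T a) = a) (hTg : ∀ (g : G) a, T (g • a) = g • T a)
    (F : α → ZMod 2) (hF : ∀ (g : G) x, F (g • x) = F x) (hFT : ∀ a, F (T a) = F a)
    (hfix : ∀ a (g : G), T a = g • a → F a = 0) : osum G F = 0 := by
  unfold osum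
  refine Finset.sum_involution
    (fun x _ => Quotient.mk (MulAction.orbitRel G α) (T (Quotient.out x))) ?_ ?_ ?_ ?_
  · intro x _
    rw [out_mk (G := G) F hF, hFT, two0]
  · intro x _ hx h
    have h' : Quotient.mk (MulAction.orbitRel G α) (T (Quotient.out x))
      = Quotient.mk (MulAction.orbitRel G α) (Quotient.out x) := by
      rw [Quotient.out_eq]; exact h
    obtain ⟨g, hg⟩ := Quotient.exact h'
    exact hx (hfix _ g hg.symm)
  · intros; exact Finset.mem_univ _
  · intro x _
    obtain ⟨g, hg⟩ : (MulAction.orbitRel G α)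
      (Quotient.out (Quotient.mk (MulAction.orbitRel G α) (T (Quotient.out x)))) (T (Quotient.out x)) :=
      Quotient.exact (Quotient.out_eq _)
    simp only at hg
    rw [← hg]
    conv_rhs => rw [← Quotient.out_eq x]
    apply Quotient.sound
    rw [hTg, hT]
    exact ⟨g, rfl⟩

end

end
end TCP

namespace TCP
noncomputable section

/-- Shuffle simplex. -/
def sh {X ι : Type*} {n K : ℕ} (c : ι → ℕ → X) (q : Word n K) (ς : Fin n → ι) (k : ℕ) : Fin n → X :=
  fun j => c (ς j) (cnt q j k)

lemma sh_smul {X ι : Type*} {n K : ℕ} (c : ι → ℕ → X) (g : Equiv.Perm (Fin n)) (q : Word n K)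
    (ς : Fin n → ι) (k : ℕ) : (fun j => sh c (g • q) ς k (g j)) = sh c q (ς ∘ g) k := by
  funext j
  simp [sh, cnt_smul]

open Classical in
/-- The summand of the fundamental chain. -/
def fsum {X ι : Type*} [Fintype ι] {n K : ℕ} (m : ℕ) (c : ι → ℕ → X)
    (Φ : (ℕ → Fin n → X) → ZMod 2) (q : Word n K) : ZMod 2 :=
  if OK m q then ∑ ς : Fin n → ι, Φ (sh c q ς) else 0

lemma fsum_smul {X ι : Type*} [Fintype ι] {n K : ℕ} (m : ℕ) (c : ι → ℕ → X)
    (Φ : (ℕ → Fin n → X) → ZMod 2)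
    (hΦ : ∀ (g : Equiv.Perm (Fin n)) p, Φ (fun k j => p k (g j)) = Φ p)
    (g : Equiv.Perm (Fin n)) (q : Word n K) : fsum m c Φ (g • q) = fsum m c Φ q := by
  unfold fsum
  by_cases h : OK m q
  · rw [if_pos h, if_pos ((OK_smul m g q).2 h)]
    refine Fintype.sum_equiv (Equiv.arrowCongr g.symm (Equiv.refl ι)) _ _ fun ς => ?_
    rw [← hΦ g]
    congr 1
    funext k
    rw [sh_smul]
    rfl
  · rw [if_neg h, if_neg (mt (OK_smul m g q).1 h)]

/-- Exchange of the letters `i` and `i+1`. -/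
def sw {n K : ℕ} (i : ℕ) (h : i + 1 < K) (q : Word n K) : Word n K :=
  q ∘ Equiv.swap ⟨i, by omega⟩ ⟨i + 1, h⟩

lemma ind_sw {n K : ℕ} (i : ℕ) (h : i + 1 < K) (q : Word n K) (j : Fin n) (t : ℕ) :
    ind (sw i h q) j t = if t = i then ind q j (i + 1) else if t = i + 1 then ind q j i
      else ind q j t := by
  by_cases ht : t < K
  · rw [ind_lt _ _ _ ht]
    unfold sw
    simp only [Function.comp, Equiv.swap_apply_def, Fin.mk.injEq]
    have hi : i < K := by omega
    split_ifs with h1 h2 h3 <;> simp_all [ind]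
  · rw [ind_ge _ _ _ (by omega), if_neg (by omega : ¬ t = i), if_neg (by omega : ¬ t = i + 1),
      ind_ge _ _ _ (by omega)]

lemma cnt_sw {n K : ℕ} (i : ℕ) (h : i + 1 < K) (q : Word n K) (j : Fin n) (t : ℕ) (ht : t ≠ i + 1) :
    cnt (sw i h q) j t = cnt q j t := by
  have h1 : ∀ t, t ≤ i → cnt (sw i h q) j t = cnt q j t := by
    intro t ht
    refine Finset.sum_congr rfl fun s hs => ?_
    rw [Finset.mem_range] at hs
    rw [ind_sw, if_neg (by omega : ¬ s = i), if_neg (by omega : ¬ s = i + 1)]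
  have h2 : ∀ t, i + 2 ≤ t → cnt (sw i h q) j t = cnt q j t := by
    intro t ht
    induction t, ht using Nat.le_induction with
    | base =>
      rw [cnt_succ, cnt_succ, h1 i le_rfl, cnt_succ, cnt_succ q, ind_sw, ind_sw]
      simp
      ring
    | succ k hk ih =>
      rw [cnt_succ, ih, cnt_succ, ind_sw, if_neg (by omega : ¬ k = i),
        if_neg (by omega : ¬ k = i + 1)]
  rcases Nat.lt_or_ge i t with h3 | h3
  · exact h2 t (by omega)
  · exact h1 t h3

lemma OK_sw {n K : ℕ} (m : ℕ) (i : ℕ) (h : i + 1 < K) (q : Word n K) :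
    OK m (sw i h q) ↔ OK m q := by
  unfold OK
  simp only [fun j => cnt_sw i h q j K (by omega)]

/-- Cancellation of the faces between different blocks. -/
lemma good_zero {X ι : Type*} [Fintype ι] {n K : ℕ} (m : ℕ) (hm : 2 ≤ m) (c : ι → ℕ → X)
    (β : (ℕ → Fin n → X) → ZMod 2)
    (hβ : ∀ (g : Equiv.Perm (Fin n)) p, β (fun k j => p k (g j)) = β p)
    (i : ℕ) (h : i + 1 < K) :
    osum (Equiv.Perm (Fin n)) (fun q : Word n K =>
      if q ⟨i, by omega⟩ ≠ q ⟨i + 1, h⟩ then fsum m c (fun p => β (p ∘ skip (i + 1))) q else 0) = 0 := by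
  have hs : ∀ (g : Equiv.Perm (Fin n)) (q : Word n K), 
      fsum m c (fun p => β (p ∘ skip (i + 1))) (g • q) = fsum m c (fun p => β (p ∘ skip (i + 1))) q :=
    fsum_smul m c _ fun g p => hβ g (p ∘ skip (i + 1))
  refine osum_inv (sw i h) ?_ ?_ _ ?_ ?_ ?_
  · intro q
    funext t
    simp [sw]
  · intro g q
    rfl
  · intro g q
    simp only [hs]
    simp
  · intro q
    have e : fsum m c (fun p => β (p ∘ skip (i + 1))) (sw i h q)
        = fsum m c (fun p => β (p ∘ skip (i + 1))) q := by
      unfold fsum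
      by_cases hq : OK m q
      · rw [if_pos hq, if_pos ((OK_sw m i h q).2 hq)]
        refine Finset.sum_congr rfl fun ς _ => ?_
        refine congrArg β ?_
        funext k j
        simp only [Function.comp, sh]
        rw [cnt_sw]
        unfold skip
        split_ifs <;> omega
      · rw [if_neg hq, if_neg (mt (OK_sw m i h q).1 hq)]
    rw [e]
    simp only [sw, Function.comp, Equiv.swap_apply_left, Equiv.swap_apply_right, ne_comm]
  · intro q g hg
    split_ifs with hne
    · unfold fsum
      rw [if_neg]
      intro hok
      have h1 := hok (q ⟨i, by omega⟩)
      unfold cnt at h1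
      rw [Finset.sum_eq_single i] at h1
      · have : ind q (q ⟨i, by omega⟩) i ≤ 1 := by unfold ind; split_ifs <;> simp
        omega
      · intro t ht hti
        rw [Finset.mem_range] at ht
        rw [ind_lt _ _ _ ht, if_neg]
        intro hqt
        have e1 := congrFun hg ⟨i, by omega⟩
        have e2 := congrFun hg ⟨t, ht⟩
        have hti' : t ≠ i + 1 := by
          rintro rfl
          exact hne hqt.symm
        simp only [sw, Function.comp, Equiv.swap_apply_left] at e1
        have e3 : Equiv.swap (⟨i, by omega⟩ : Fin K) ⟨i + 1, h⟩ ⟨t, ht⟩ = ⟨t, ht⟩ := by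
          apply Equiv.swap_apply_of_ne_of_ne <;> simp [hti, hti']
        simp only [sw, Function.comp, e3] at e2
        simp only [Pi.smul_apply, hqt] at e1 e2
        exact hne (e2.trans e1.symm)
      · intro hi; simp at hi; omega
    · rfl

end
end TCP

namespace TCP
noncomputable section

/-- Shuffle simplex with block `j` following the face `skip r`. -/
def qs {X ι : Type*} {n K : ℕ} (c : ι → ℕ → X) (q : Word n K) (j : Fin n) (ς : Fin n → ι) (r : ℕ)
    (k : ℕ) : Fin n → X :=
  fun j' => if j' = j then c (ς j) (skip r (cnt q j k)) else c (ς j') (cnt q j' k)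

/-- Summing over the simplices of block `j` gives zero. -/
lemma block_zero {X ι : Type*} [Fintype ι] {n K : ℕ} (m : ℕ) (τ : X → X) (c : ι → ℕ → X)
    (β : (ℕ → Fin n → X) → ZMod 2) (hdep : Dep (K + 1) β)
    (hflip : ∀ j p, β (fun k => Function.update (p k) j (τ (p k j))) = β p)
    (hc : ∀ φ : (ℕ → X) → ZMod 2, Dep m φ → (∀ p, φ (τ ∘ p) = φ p) → ∑ a, dl m φ (c a) = 0)
    (q : Word n K) (j : Fin n) (hq : cnt q j K < m) :
    ∑ ς : Fin n → ι, ∑ r ∈ Finset.range (m + 1), β (qs c q j ς r) = 0 := by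
  rw [← (Equiv.funSplitAt j ι).symm.sum_comp, Fintype.sum_prod_type, Finset.sum_comm]
  refine Finset.sum_eq_zero fun ρ _ => ?_
  let φ : (ℕ → X) → ZMod 2 := fun p => β (fun k j' => 
    if h : j' = j then p (cnt q j k) else c (ρ ⟨j', h⟩) (cnt q j' k))
  have := hc φ ?_ ?_
  · rw [← this]
    refine Finset.sum_congr rfl fun a _ => ?_
    unfold dl
    refine Finset.sum_congr rfl fun r _ => ?_
    refine congrArg β ?_
    funext k j'
    unfold qs
    by_cases h : j' = j
    · subst h
      simp [Equiv.funSplitAt, Equiv.piSplitAt]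
    · simp [h, Equiv.funSplitAt, Equiv.piSplitAt]
  · intro p p' hp
    refine hdep _ _ fun r hr => ?_
    funext j'
    have := cnt_mono q j (by omega : r ≤ K)
    rw [hp _ (by omega : cnt q j r < m)]
  · intro p
    simp only [φ]
    refine Eq.trans ?_ (hflip j _)
    refine congrArg β ?_
    funext k j'
    by_cases h : j' = j
    · subst h
      simp
    · simp [h]

/-- The face `i` of the word `q` is between different blocks. -/
def gd {n K : ℕ} (i : ℕ) (q : Word n (K + 1)) : Prop :=
  ∃ h : 0 < i ∧ i < K + 1, q ⟨i - 1, by omega⟩ ≠ q ⟨i, h.2⟩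

/-- The position at which we insert. -/
def ps (K i : ℕ) : Fin (K + 1) := ⟨min i K, by omega⟩

lemma not_gd_insert {n K : ℕ} (i : ℕ) (hi : i ≤ K + 1) (j : Fin n) (q : Word n K) :
    ¬ gd i ((ps K i).insertNth j q : Word n (K + 1)) ↔ i = 0 ∨ i = K + 1 ∨ ind q j (i - 1) = 1 := by
  unfold gd
  by_cases h0 : i = 0
  · simp [h0]
  by_cases h1 : i = K + 1
  · simp [h1]
  have hp : ((ps K i : Fin (K + 1)) : ℕ) = i := by simp [ps]; omega
  have e1 : ((ps K i).insertNth j q : Word n (K + 1)) ⟨i, by omega⟩ = j := by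
    have : (⟨i, by omega⟩ : Fin (K + 1)) = ps K i := by ext; simp [hp]
    rw [this]; simp
  have e2 := ind_insert (ps K i) j q j (i - 1)
  rw [if_pos (by omega), ind_lt _ _ _ (by omega)] at e2
  rw [← e2]
  have : 0 < i ∧ i < K + 1 := by omega
  simp [h0, h1, this, e1]

lemma skip_insert {n K : ℕ} (i : ℕ) (hi : i ≤ K + 1) (j : Fin n) (q : Word n K)
    (hb : i = 0 ∨ i = K + 1 ∨ ind q j (i - 1) = 1) (j' : Fin n) (k : ℕ) (hk : k ≤ K) :
    cnt ((ps K i).insertNth j q : Word n (K + 1)) j' (skip i k) = 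
      if j' = j then skip (if i = K + 1 then cnt q j K + 1 else cnt q j i) (cnt q j k) 
        else cnt q j' k := by
  have hp : ((ps K i : Fin (K + 1)) : ℕ) = min i K := rfl
  by_cases hki : k < i
  · rw [skip_lt hki, cnt_insert_le _ _ _ _ _ (by omega)]
    split_ifs with h1 h2
    · subst h1
      rw [skip_lt]
      have := cnt_mono q j' hk
      omega
    · subst h1
      rw [skip_lt]
      have h3 : ind q j' (i - 1) = 1 := by omega
      have h4 := cnt_mono q j' (by omega : k ≤ i - 1)
      have h5 := cnt_succ q j' (i - 1)
      rw [show i - 1 + 1 = i by omega] at h5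
      omega
    · rfl
  · rw [not_lt] at hki
    rw [skip_ge hki, cnt_insert_ge _ _ _ _ _ (by omega)]
    split_ifs with h1 h2 h3 h4 h5
    · omega
    · subst h1; rw [skip_ge (cnt_mono q _ hki)]
    · subst h1; exact absurd rfl h2
    all_goals simp_all

lemma insert_smul {n K : ℕ} (p : Fin (K + 1)) (g : Equiv.Perm (Fin n)) (x : Fin n × Word n K) :
    (p.insertNth (g • x).1 (g • x).2 : Word n (K + 1)) = g • (p.insertNth x.1 x.2 : Word n (K + 1)) := by
  funext t
  obtain h | ⟨s, hs⟩ := Fin.eq_self_or_eq_succAbove p t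
  · subst h; simp
  · subst hs; simp

lemma gd_smul {n K : ℕ} (i : ℕ) (g : Equiv.Perm (Fin n)) (q : Word n (K + 1)) :
    gd i (g • q) ↔ gd i q := by
  simp [gd]

open Classical in
lemma bad_zero {X ι : Type*} [Fintype ι] {n K : ℕ} (m : ℕ) (τ : X → X) (c : ι → ℕ → X)
    (β : (ℕ → Fin n → X) → ZMod 2) (hdep : Dep (K + 1) β)
    (hflip : ∀ j p, β (fun k => Function.update (p k) j (τ (p k j))) = β p)
    (hc : ∀ φ : (ℕ → X) → ZMod 2, Dep m φ → (∀ p, φ (τ ∘ p) = φ p) → ∑ a, dl m φ (c a) = 0)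
    (q : Word n K) (j : Fin n) :
    ∑ i ∈ Finset.range (K + 2), (if gd i ((ps K i).insertNth j q : Word n (K + 1)) then 0 else 
      fsum m c (fun p => β (p ∘ skip i)) ((ps K i).insertNth j q : Word n (K + 1))) = 0 := by
  by_cases hok : ∀ j', cnt q j' K + (if j = j' then 1 else 0) = m
  · have hj : cnt q j K + 1 = m := by simpa using hok j
    let g : ℕ → ZMod 2 := fun r => ∑ ς : Fin n → ι, β (qs c q j ς r)
    have e : ∀ i, i ≤ K + 1 → (if gd i ((ps K i).insertNth j q : Word n (K + 1)) then 0 else 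
      fsum m c (fun p => β (p ∘ skip i)) ((ps K i).insertNth j q : Word n (K + 1)))
      = if i = 0 ∨ i = K + 1 ∨ ind q j (i - 1) = 1 then 
        g (if i = K + 1 then cnt q j K + 1 else cnt q j i) else 0 := by
      intro i hi
      have hg := not_gd_insert i hi j q
      by_cases hb : i = 0 ∨ i = K + 1 ∨ ind q j (i - 1) = 1
      · rw [if_neg (hg.2 hb), if_pos hb]
        unfold fsum
        rw [if_pos ((OK_insert m _ j q).2 hok)]
        refine Finset.sum_congr rfl fun ς _ => ?_
        refine hdep _ _ fun k hk => ?_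
        funext j'
        simp only [Function.comp, sh, qs, skip_insert i hi j q hb j' k (by omega)]
        by_cases hjj : j' = j
        · subst hjj; simp
        · simp [hjj]
      · rw [if_neg hb, if_pos]
        by_contra h
        exact hb (hg.1 h)
    rw [Finset.sum_congr rfl fun i hi => e i (by rw [Finset.mem_range] at hi; omega),
      Finset.sum_range_succ, Finset.sum_range_succ']
    have e2 : ∀ t ∈ Finset.range K, (if t + 1 = 0 ∨ t + 1 = K + 1 ∨ ind q j (t + 1 - 1) = 1 then 
        g (if t + 1 = K + 1 then cnt q j K + 1 else cnt q j (t + 1)) else 0)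
        = if ind q j t = 1 then g (cnt q j (t + 1)) else 0 := by
      intro t ht
      rw [Finset.mem_range] at ht
      have : t ≠ K := by omega
      simp [this]
    rw [Finset.sum_congr rfl e2, sum_ind]
    have e3 := block_zero m τ c β hdep hflip hc q j (by omega)
    rw [Finset.sum_comm, Finset.sum_range_succ', ← hj, Finset.sum_range_succ] at e3
    rw [← e3]
    simp only [g]
    simp [cnt_zero]
    ring
  · refine Finset.sum_eq_zero fun i _ => ?_
    unfold fsum
    rw [if_neg (mt (OK_insert m _ j q).1 hok)]
    simp

lemma claimA {X ι : Type*} [Fintype ι] {n K : ℕ} (m : ℕ) (hm : 2 ≤ m) (τ : X → X) (c : ι → ℕ → X)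
    (β : (ℕ → Fin n → X) → ZMod 2) (hdep : Dep (K + 1) β)
    (hβ : ∀ (g : Equiv.Perm (Fin n)) p, β (fun k j => p k (g j)) = β p)
    (hflip : ∀ j p, β (fun k => Function.update (p k) j (τ (p k j))) = β p)
    (hc : ∀ φ : (ℕ → X) → ZMod 2, Dep m φ → (∀ p, φ (τ ∘ p) = φ p) → ∑ a, dl m φ (c a) = 0) :
    osum (Equiv.Perm (Fin n)) (fun q : Word n (K + 1) => fsum m c (dl (K + 1) β) q) = 0 := by
  classical
  have h1 : ∀ q : Word n (K + 1), fsum m c (dl (K + 1) β) q = 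
      ∑ i ∈ Finset.range (K + 2), ((if gd i q then fsum m c (fun p => β (p ∘ skip i)) q else 0) + 
        if gd i q then 0 else fsum m c (fun p => β (p ∘ skip i)) q) := by
    intro q
    have : ∀ i, ((if gd i q then fsum m c (fun p => β (p ∘ skip i)) q else 0) + 
        if gd i q then 0 else fsum m c (fun p => β (p ∘ skip i)) q)
        = fsum m c (fun p => β (p ∘ skip i)) q := by
      intro i; split_ifs <;> simp
    simp only [this]
    unfold fsum dl
    split_ifs
    · rw [Finset.sum_comm]
    · simp
  simp only [h1]
  rw [osum_sum]
  simp only [osum_add]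
  rw [Finset.sum_add_distrib]
  have z1 : ∀ i ∈ Finset.range (K + 2), osum (Equiv.Perm (Fin n)) 
      (fun q : Word n (K + 1) => if gd i q then fsum m c (fun p => β (p ∘ skip i)) q else 0) = 0 := by
    intro i _
    by_cases hi : 0 < i ∧ i < K + 1
    · obtain ⟨t, rfl⟩ : ∃ t, i = t + 1 := ⟨i - 1, by omega⟩
      refine Eq.trans ?_ (good_zero (K := K + 1) m hm c β hβ t hi.2)
      congr 1
      funext q
      simp [gd, hi.2]
    · refine osum_zero _ fun q => ?_
      rw [if_neg]
      rintro ⟨h, _⟩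
      exact hi h
  have hs : ∀ i, ∀ (g : Equiv.Perm (Fin n)) (q : Word n (K + 1)), 
      fsum m c (fun p => β (p ∘ skip i)) (g • q) = fsum m c (fun p => β (p ∘ skip i)) q :=
    fun i => fsum_smul m c _ fun g p => hβ g (p ∘ skip i)
  have z2 : ∀ i ∈ Finset.range (K + 2), osum (Equiv.Perm (Fin n)) 
      (fun q : Word n (K + 1) => if gd i q then 0 else fsum m c (fun p => β (p ∘ skip i)) q) = 
      osum (Equiv.Perm (Fin n)) (fun x : Fin n × Word n K => 
        if gd i ((ps K i).insertNth x.1 x.2 : Word n (K + 1)) then 0 else 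
          fsum m c (fun p => β (p ∘ skip i)) ((ps K i).insertNth x.1 x.2 : Word n (K + 1))) := by
    intro i _
    refine (osum_equiv (G := Equiv.Perm (Fin n)) (Fin.insertNthEquiv (fun _ => Fin n) (ps K i)) ?_ 
      (fun q : Word n (K + 1) => if gd i q then 0 else fsum m c (fun p => β (p ∘ skip i)) q) ?_).symm
    · exact insert_smul (ps K i)
    · intro g q
      simp only [hs]
      by_cases h : gd i q
      · rw [if_pos h, if_pos ((gd_smul i g q).2 h)]
      · rw [if_neg h, if_neg (mt (gd_smul i g q).1 h)]
  rw [Finset.sum_eq_zero z1, Finset.sum_congr rfl z2, ← osum_sum, zero_add]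
  exact osum_zero _ fun x => bad_zero m τ c β hdep hflip hc x.2 x.1

end
end TCP

namespace TCP
noncomputable section

lemma cnt_card {n K : ℕ} (q : Word n K) (j : Fin n) :
    cnt q j K = Fintype.card {t // q t = j} := by
  rw [Fintype.card_subtype, Finset.card_filter]
  unfold cnt
  rw [← Fin.sum_univ_eq_sum_range (ind q j)]
  refine Finset.sum_congr rfl fun t _ => ?_
  rw [ind_lt _ _ _ t.2]

open Classical in
lemma card_words (n m : ℕ) :
    (Finset.univ.filter fun q : Word n (n * m) => OK m q).card * (m.factorial) ^ n
      = (n * m).factorial := by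
  let q0 : Word n (n * m) := fun t => (finProdFinEquiv.symm t).1
  have h0 : ∀ j, Fintype.card {t // q0 t = j} = m := by
    intro j
    have e : {t // q0 t = j} ≃ Fin m :=
      { toFun := fun t => (finProdFinEquiv.symm t.1).2
        invFun := fun s => ⟨finProdFinEquiv (j, s), by simp only [q0, Equiv.symm_apply_apply]⟩
        left_inv := by
          rintro ⟨t, ht⟩
          apply Subtype.ext
          simp only [q0] at ht
          simp only
          rw [← ht]
          exact finProdFinEquiv.apply_symm_apply t
        right_inv := by intro s; simp only [Equiv.symm_apply_apply] }
    rw [Fintype.card_congr e, Fintype.card_fin]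
  have h1 : ∀ q : Word n (n * m), OK m q → ∃ π : Equiv.Perm (Fin (n * m)), q0 ∘ π = q := by
    intro q hq
    have : ∀ j, Nonempty ({t // q t = j} ≃ {t // q0 t = j}) := by
      intro j
      rw [← Fintype.card_eq, h0, ← cnt_card, hq j]
    let e := fun j => (this j).some
    exact ⟨Equiv.ofFiberEquiv e, funext fun t => Equiv.ofFiberEquiv_map e t⟩
  have hq0 : OK m q0 := fun j => by rw [cnt_card, h0]
  have h2 : ∀ π : Equiv.Perm (Fin (n * m)), OK m (q0 ∘ π) := by
    intro π j
    rw [cnt_card]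
    refine Eq.trans ?_ (h0 j)
    refine Fintype.card_congr (Equiv.subtypeEquiv π fun t => ?_)
    rfl
  have h3 := Finset.card_eq_sum_card_fiberwise (s := (Finset.univ : Finset (Equiv.Perm (Fin (n * m)))))
    (f := fun π : Equiv.Perm (Fin (n * m)) => q0 ∘ (π : Fin (n * m) → Fin (n * m))) (t := Finset.univ.filter fun q : Word n (n * m) => OK m q)
    (by intro π _; simp [h2])
  rw [Finset.card_univ, Fintype.card_perm, Fintype.card_fin] at h3
  rw [h3, Finset.sum_const_nat]
  intro q hq
  rw [Finset.mem_filter] at hq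
  obtain ⟨ρ, hρ⟩ := h1 q hq.2
  have h4 := DomMulAct.stabilizer_card q0
  simp only [h0, Finset.prod_const, Finset.card_univ, Fintype.card_fin] at h4
  rw [← h4, Fintype.card_subtype]
  refine Finset.card_bij (fun π _ => π * ρ⁻¹) ?_ ?_ ?_
  · intro π hπ
    simp only [Finset.mem_filter, Finset.mem_univ, true_and] at hπ ⊢
    funext t
    have := congrFun (hπ.trans hρ.symm) (ρ⁻¹ t)
    simpa using this
  · intro π _ π' _ h
    exact mul_right_cancel h
  · intro π hπ
    simp only [Finset.mem_filter, Finset.mem_univ, true_and] at hπ ⊢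
    refine ⟨π * ρ, ?_, by simp⟩
    rw [← hρ]
    funext t
    have := congrFun hπ (ρ t)
    simpa using this

open Classical in
lemma card_orbits (n m : ℕ) (hm : 0 < m) :
    (Finset.univ.filter fun x : Quotient (MulAction.orbitRel (Equiv.Perm (Fin n)) (Word n (n * m))) =>
      OK m (Quotient.out x)).card * n.factorial =
    (Finset.univ.filter fun q : Word n (n * m) => OK m q).card := by
  have hrel : ∀ q : Word n (n * m), ∃ g : Equiv.Perm (Fin n),
      g • q = Quotient.out (Quotient.mk (MulAction.orbitRel (Equiv.Perm (Fin n)) (Word n (n * m))) q) := by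
    intro q
    obtain ⟨g, hg⟩ : (MulAction.orbitRel (Equiv.Perm (Fin n)) (Word n (n * m)))
      (Quotient.out (Quotient.mk (MulAction.orbitRel (Equiv.Perm (Fin n)) (Word n (n * m))) q)) q :=
      Quotient.exact (Quotient.out_eq _)
    exact ⟨g, hg⟩
  have h3 := Finset.card_eq_sum_card_fiberwise
    (s := Finset.univ.filter fun q : Word n (n * m) => OK m q)
    (f := fun q => Quotient.mk (MulAction.orbitRel (Equiv.Perm (Fin n)) (Word n (n * m))) q)
    (t := Finset.univ.filter fun x : Quotient (MulAction.orbitRel (Equiv.Perm (Fin n)) (Word n (n * m))) =>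
      OK m (Quotient.out x))
    (by
      intro q hq
      simp only [Finset.coe_filter, Finset.mem_univ, true_and, Set.mem_ofPred_eq] at hq ⊢
      obtain ⟨g, hg⟩ := hrel q
      rw [← hg, OK_smul]
      exact hq)
  rw [h3, Finset.sum_const_nat]
  intro x hx
  simp only [Finset.mem_filter, Finset.mem_univ, true_and] at hx
  have : n.factorial = (Finset.univ : Finset (Equiv.Perm (Fin n))).card := by
    rw [Finset.card_univ, Fintype.card_perm, Fintype.card_fin]
  rw [this]
  symm
  refine Finset.card_bij (fun g _ => g • Quotient.out x) ?_ ?_ ?_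
  · intro g _
    simp only [Finset.mem_filter, Finset.mem_univ, true_and, OK_smul]
    refine ⟨hx, ?_⟩
    conv_rhs => rw [← Quotient.out_eq x]
    exact Quotient.sound ⟨g, rfl⟩
  · intro g _ g' _ h
    ext1 j
    have h1 := hx j
    rw [cnt_card] at h1
    obtain ⟨t, ht⟩ : Nonempty {t // Quotient.out x t = j} := by
      rw [← Fintype.card_pos_iff]; omega
    have := congrFun h t
    simp only [Pi.smul_apply, ht] at this
    exact this
  · intro q hq
    simp only [Finset.mem_filter, Finset.mem_univ, true_and] at hq
    obtain ⟨g, hg⟩ := hrel q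
    rw [hq.2] at hg
    exact ⟨g⁻¹, Finset.mem_univ _, by rw [← hg]; simp⟩

lemma val_fact (e k : ℕ) :
    padicValNat 2 (2 ^ e * k).factorial + k = padicValNat 2 k.factorial + k * 2 ^ e := by
  induction e with
  | zero => simp
  | succ e ih =>
    have : Fact (Nat.Prime 2) := ⟨Nat.prime_two⟩
    have := padicValNat_factorial_mul (p := 2) (2 ^ e * k)
    rw [show 2 ^ (e + 1) * k = 2 * (2 ^ e * k) by ring, this]
    have : k * 2 ^ (e + 1) = k * 2 ^ e + 2 ^ e * k := by ring
    omega

open Classical in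
lemma orbits_odd (n e : ℕ) :
    osum (Equiv.Perm (Fin n)) (fun q : Word n (n * 2 ^ e) => if OK (2 ^ e) q then 1 else 0) = 1 := by
  unfold osum
  rw [Finset.sum_boole]
  have h1 := card_orbits n (2 ^ e) (by positivity)
  have h2 := card_words n (2 ^ e)
  rw [← h1] at h2
  generalize (Finset.card _) = B at *
  have : Fact (Nat.Prime 2) := ⟨Nat.prime_two⟩
  have hB : B ≠ 0 := by
    rintro rfl
    simp at h2
    exact (Nat.factorial_ne_zero _ h2.symm)
  have h3 := congrArg (padicValNat 2) h2
  rw [padicValNat.mul (mul_ne_zero hB (Nat.factorial_ne_zero _)) (pow_ne_zero _ (Nat.factorial_ne_zero _)),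
    padicValNat.mul hB (Nat.factorial_ne_zero _), padicValNat.pow] at h3
  have h4 := val_fact e n
  have h5 := val_fact e 1
  rw [mul_one, Nat.factorial_one, padicValNat_one_right] at h5
  rw [mul_comm (2 ^ e) n] at h4
  have h6 : n * padicValNat 2 (2 ^ e).factorial + n = n * 2 ^ e := by
    have : n * (padicValNat 2 (2 ^ e).factorial + 1) = n * 2 ^ e := by rw [h5]; ring
    linarith
  have h7 : padicValNat 2 B = 0 := by omega
  rw [padicValNat.eq_zero_iff] at h7
  have : ¬ 2 ∣ B := by omega
  rw [ZMod.natCast_eq_one_iff_odd]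
  rwa [← Nat.not_even_iff_odd, even_iff_two_dvd]

end
end TCP

namespace TCP
noncomputable section

lemma Wc_sh {X ι : Type*} {n K : ℕ} (c : ι → ℕ → X) (u : X → ZMod 2) (q : Word n K)
    (ς : Fin n → ι) (k : ℕ) (hk : k ≤ K) :
    Wc (fun _ x => ∑ j, u (x j)) k (sh c q ς) = ∏ j, Wc (fun _ => u) (cnt q j k) (c (ς j)) := by
  induction k with
  | zero => simp [Wc, cnt_zero]
  | succ k ih =>
    rw [Wc_succ, ih (by omega)]
    have hi : ∀ j, ind q j k = if q ⟨k, hk⟩ = j then 1 else 0 := fun j => ind_lt q j k hk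
    rw [← Finset.sum_add_distrib, Finset.sum_eq_single (q ⟨k, hk⟩)]
    · rw [← Finset.mul_prod_erase _ _ (Finset.mem_univ (q ⟨k, hk⟩)),
        ← Finset.mul_prod_erase _ (fun j => Wc (fun _ => u) (cnt q j (k + 1)) (c (ς j)))
          (Finset.mem_univ (q ⟨k, hk⟩))]
      have e : ∏ j ∈ Finset.univ.erase (q ⟨k, hk⟩), Wc (fun _ => u) (cnt q j (k + 1)) (c (ς j))
          = ∏ j ∈ Finset.univ.erase (q ⟨k, hk⟩), Wc (fun _ => u) (cnt q j k) (c (ς j)) := by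
        refine Finset.prod_congr rfl fun j hj => ?_
        rw [cnt_succ, hi, if_neg (Finset.ne_of_mem_erase hj).symm, add_zero]
      rw [e]
      simp only [sh, cnt_succ, hi, if_true]
      rw [Wc_succ]
      ring
    · intro j _ hj
      simp only [sh, cnt_succ, hi, if_neg hj.symm, add_zero, two0]
    · simp

open Classical in
lemma claimB {X ι : Type*} [Fintype ι] {n K : ℕ} (m : ℕ) (c : ι → ℕ → X) (u : X → ZMod 2)
    (hc : ∑ a, Wc (fun _ => u) m (c a) = 1) (q : Word n K) :
    fsum m c (Wc (fun _ x => ∑ j, u (x j)) K) q = if OK m q then 1 else 0 := by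
  unfold fsum
  split_ifs with h
  · simp only [Wc_sh c u q _ K le_rfl, h _]
    have := Finset.prod_univ_sum (fun _ : Fin n => (Finset.univ : Finset ι))
      (fun _ a => Wc (fun _ => u) m (c a))
    rw [Fintype.piFinset_univ] at this
    rw [← this]
    simp [hc]
  · rfl

open Classical in
lemma orbits_odd' (n e N : ℕ) (h : N = n * 2 ^ e) :
    osum (Equiv.Perm (Fin n)) (fun q : Word n N => if OK (2 ^ e) q then 1 else 0) = 1 := by
  subst h; exact orbits_odd n e

lemma exists_odd (m : ℕ) : ∃ u : S m → ZMod 2, ∀ y, u (-y) = u y + 1 := by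
  classical
  refine ⟨fun y => if (Quotient.mk (antipodalSetoid m) y).out = y then 0 else 1, fun y => ?_⟩
  have h1 : Quotient.mk (antipodalSetoid m) (-y) = Quotient.mk (antipodalSetoid m) y :=
    Quotient.sound (Or.inr (by simp))
  beta_reduce
  rw [h1]
  have hne : y ≠ -y := by
    intro h
    have h' := congrArg Subtype.val h
    have : y.1 = 0 := by
      have h2 : y.1 = -y.1 := by simpa using h'
      have h3 : (2 : ℝ) • y.1 = 0 := by
        rw [two_smul]; exact add_eq_zero_iff_eq_neg.2 h2
      exact (smul_eq_zero.1 h3).resolve_left two_ne_zero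
    have hy := mem_sphere_zero_iff_norm.1 y.2
    rw [this] at hy
    simp at hy
  have h2 : (antipodalSetoid m) (Quotient.mk (antipodalSetoid m) y).out y :=
    Quotient.exact (Quotient.out_eq _)
  rcases h2 with h2 | h2
  · have h3 : (Quotient.mk (antipodalSetoid m) y).out = y := Subtype.ext h2
    simp [h3, hne]
  · have h3 : (Quotient.mk (antipodalSetoid m) y).out = -y := Subtype.ext h2
    simp [h3, hne.symm, two0]

theorem no_cover (n m e k : ℕ) (hn : 0 < n) (he : 1 < e) (hm : m = 2 ^ e) (hk : k ≤ n * m)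
    (V : Fin k → ZMod 2 → Set (Fin n → S m)) (hV : ∀ i a, IsOpen (V i a))
    (hdis : ∀ i x, x ∈ V i 0 → x ∉ V i 1)
    (hflip : ∀ i a x j, x ∈ V i a → Function.update x j (-(x j)) ∈ V i (a + 1))
    (hperm : ∀ i a x (g : Equiv.Perm (Fin n)), x ∈ V i a → (fun j => x (g j)) ∈ V i a)
    (hcov : ∀ x, ∃ i a, x ∈ V i a) : False := by
  classical
  obtain ⟨u, hu⟩ := exists_odd m
  let s0 : (Fin n → S m) → ZMod 2 := fun x => ∑ j, u (x j)
  have hs0f : ∀ x j, s0 (Function.update x j (-(x j))) = s0 x + 1 := by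
    intro x j
    simp only [s0]
    rw [← Finset.add_sum_erase _ _ (Finset.mem_univ j),
      ← Finset.add_sum_erase _ (fun j => u (x j)) (Finset.mem_univ j)]
    have : ∑ l ∈ Finset.univ.erase j, u (Function.update x j (-(x j)) l)
        = ∑ l ∈ Finset.univ.erase j, u (x l) := by
      refine Finset.sum_congr rfl fun l hl => ?_
      rw [Function.update_of_ne (Finset.ne_of_mem_erase hl)]
    rw [this]
    simp only [Function.update_self, hu]
    ring
  have hs0p : ∀ x (g : Equiv.Perm (Fin n)), s0 (fun j => x (g j)) = s0 x := by
    intro x g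
    exact Equiv.sum_comp g (fun j => u (x j))
  have h10 : ∀ i x, x ∈ V i 1 → x ∉ V i 0 := fun i x h h' => hdis i x h' h
  have hfl2 : ∀ i a x j, Function.update x j (-(x j)) ∈ V i (a + 1) ↔ x ∈ V i a := by
    intro i a x j
    refine ⟨fun h => ?_, hflip i a x j⟩
    have := hflip i _ _ j h
    have e1 : a + 1 + 1 = a := by rw [add_assoc, two0 1, add_zero]
    rw [e1] at this
    simpa using this
  have hpm2 : ∀ i a x (g : Equiv.Perm (Fin n)), (fun j => x (g j)) ∈ V i a ↔ x ∈ V i a := by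
    intro i a x g
    refine ⟨fun h => ?_, hperm i a x g⟩
    have := hperm i _ _ g⁻¹ h
    simpa using this
  let s : ℕ → (Fin n → S m) → ZMod 2 := fun i x =>
    if h : i < k then (if x ∈ V ⟨i, h⟩ 0 then 0 else if x ∈ V ⟨i, h⟩ 1 then 1 else s0 x) else s0 x
  have hsV : ∀ (i : Fin k) a x, x ∈ V i a → s i x = a := by
    intro i a x hx
    have ha : a = 0 ∨ a = 1 := by clear hx; revert a; decide
    rcases ha with rfl | rfl
    · simp [s, hx]
    · simp [s, hx, h10 i x hx]
  have hsf : ∀ i x j, s i (Function.update x j (-(x j))) = s i x + 1 := by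
    intro i x j
    by_cases h : i < k
    · have e0 : Function.update x j (-(x j)) ∈ V ⟨i, h⟩ 0 ↔ x ∈ V ⟨i, h⟩ 1 := by
        have := hfl2 ⟨i, h⟩ 1 x j
        rwa [two0 1] at this
      have e1 : Function.update x j (-(x j)) ∈ V ⟨i, h⟩ 1 ↔ x ∈ V ⟨i, h⟩ 0 := by
        have := hfl2 ⟨i, h⟩ 0 x j
        rwa [zero_add] at this
      have d := hdis ⟨i, h⟩ x
      simp only [s, h, dif_pos, e0, e1, hs0f]
      by_cases hx0 : x ∈ V ⟨i, h⟩ 0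
      · simp [hx0, d hx0]
      · by_cases hx1 : x ∈ V ⟨i, h⟩ 1
        · simp [hx0, hx1, two0]
        · simp [hx0, hx1]
    · simp only [s, h, dif_neg, not_false_eq_true, hs0f]
  have hsp : ∀ i x (g : Equiv.Perm (Fin n)), s i (fun j => x (g j)) = s i x := by
    intro i x g
    simp only [s, hpm2, hs0p]
  let 𝒢 : Set ((Fin n → S m) → (Fin n → S m)) :=
    {G | (∃ j, G = fun x => Function.update x j (-(x j))) ∨
      ∃ g : Equiv.Perm (Fin n), G = fun x j => x (g j)}
  obtain ⟨K, hK⟩ : ∃ K, n * m = K + 1 := by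
    have : 0 < n * m := by rw [hm]; positivity
    exact ⟨n * m - 1, by omega⟩
  obtain ⟨β, hβ1, hβ2, hβ3⟩ := cobound 𝒢 s (fun _ => s0) (by
    rintro G (⟨j, rfl⟩ | ⟨g, rfl⟩)
    · exact ⟨1, fun i x => ⟨hsf i x j, hs0f x j⟩⟩
    · exact ⟨0, fun i x => ⟨by rw [add_zero]; exact hsp i x g, by rw [add_zero]; exact hs0p x g⟩⟩) K
  obtain ⟨δ, hδ, hleb⟩ := lebesgue_number_lemma_of_metric (isCompact_univ (X := Fin n → S m))
    (c := fun p : Fin k × ZMod 2 => V p.1 p.2) (fun p => hV _ _)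
    (fun x _ => by
      obtain ⟨i, a, h⟩ := hcov x
      exact Set.mem_iUnion.2 ⟨(i, a), h⟩)
  have hm2 : 2 ≤ m := by
    rw [hm]
    calc 2 = 2 ^ 1 := by norm_num
      _ ≤ 2 ^ e := Nat.pow_le_pow_right (by norm_num) he.le
  obtain ⟨ι, hι, c, -, hc2, hc3, hc4⟩ := sphere_chain m u hu m le_rfl δ hδ
  have hA := claimA (K := K) (n := n) m hm2 Neg.neg c β hβ1
    (fun g p => hβ2 _ (Or.inr ⟨g, rfl⟩) p) (fun j p => hβ2 _ (Or.inl ⟨j, rfl⟩) p)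
    (hc3 (by omega))
  have hB : ∀ q : Word n (K + 1), fsum m c (dl (K + 1) β) q = if OK m q then 1 else 0 := by
    intro q
    rw [← claimB m c u hc4 q]
    unfold fsum
    split_ifs with hq
    · refine Finset.sum_congr rfl fun ς _ => ?_
      rw [← hβ3]
      have : Wc s (K + 1) (sh c q ς) = 0 := by
        obtain ⟨⟨i, a⟩, hia⟩ := hleb (sh c q ς 0) (Set.mem_univ _)
        have hmem : ∀ t, sh c q ς t ∈ V i a := by
          intro t
          apply hia
          rw [Metric.mem_ball, dist_pi_lt_iff hδ]
          intro j
          exact hc2 _ _ _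
        unfold Wc
        refine Finset.prod_eq_zero (i := (i : ℕ)) ?_ ?_
        · rw [Finset.mem_range]; have := i.2; omega
        · rw [hsV i a _ (hmem _), hsV i a _ (hmem _), two0]
      rw [this, zero_add]
    · rfl
  simp only [hB] at hA
  have hO := orbits_odd' n e (K + 1) (by rw [← hK, hm])
  rw [← hm, hA] at hO
  exact zero_ne_one hO

end
end TCP

namespace TCP
noncomputable section

/-- The projection of the sphere to projective space. -/
def pr (m : ℕ) (y : S m) : RP m := Quotient.mk (antipodalSetoid m) y

lemma pr_neg (m : ℕ) (y : S m) : pr m (-y) = pr m y := Quotient.sound (Or.inr (by simp))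

lemma pr_eq (m : ℕ) (y z : S m) : pr m y = pr m z ↔ y = z ∨ y = -z := by
  constructor
  · intro h
    rcases (Quotient.exact h : (antipodalSetoid m) y z) with h | h
    · exact Or.inl (Subtype.ext h)
    · exact Or.inr (Subtype.ext h)
  · rintro (rfl | rfl)
    · rfl
    · exact pr_neg m z

lemma pr_cont (m : ℕ) : Continuous (pr m) := continuous_quotient_mk'

lemma pr_quot (m : ℕ) : Topology.IsQuotientMap (pr m) := isQuotientMap_quotient_mk'

/-- The antipodal action. -/
@[reducible] def antAct (m : ℕ) : MulAction ℤˣ (S m) where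
  smul g y := if g = 1 then y else -y
  one_smul y := by
    change (if (1 : ℤˣ) = 1 then y else -y) = y
    simp
  mul_smul g h y := by
    change (if g * h = 1 then y else -y) = if g = 1 then (if h = 1 then y else -y) else
      -(if h = 1 then y else -y)
    rcases Int.units_eq_one_or g with rfl | rfl <;> rcases Int.units_eq_one_or h with rfl | rfl <;>
      simp

lemma pr_cov (m : ℕ) : IsCoveringMap (pr m) := by
  let _ := antAct m
  have hs : ∀ (g : ℤˣ) (y : S m), g • y = if g = 1 then y else -y := fun _ _ => rfl
  have : IsQuotientCoveringMap (pr m) ℤˣ :=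
    { toIsQuotientMap := pr_quot m
      continuous_const_smul := by
        intro g
        rcases Int.units_eq_one_or g with rfl | rfl
        · simp only [hs, if_true]; exact continuous_id
        · have : (-1 : ℤˣ) ≠ 1 := by decide
          simp only [hs, this, if_false]; exact continuous_neg
      apply_eq_iff_mem_orbit := by
        intro y z
        rw [pr_eq]
        constructor
        · rintro (rfl | rfl)
          · exact ⟨1, by simp⟩
          · exact ⟨-1, by have : (-1 : ℤˣ) ≠ 1 := by decide
                          simp only [hs, this, if_false]⟩
        · rintro ⟨g, rfl⟩
          simp only [hs]
          split_ifs <;> simp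
      disjoint := by
        intro y
        refine ⟨Metric.ball y 1, Metric.ball_mem_nhds y one_pos, ?_⟩
        rintro g ⟨z, ⟨w, hw, rfl⟩, hz⟩
        by_contra hg
        simp only [hs, hg, if_false] at hz
        rw [Metric.mem_ball, Subtype.dist_eq, dist_eq_norm] at hw hz
        have hy : ‖y.1‖ = 1 := mem_sphere_zero_iff_norm.1 y.2
        have e : (2 : ℝ) • y.1 = (y.1 - w.1) + (y.1 - (-w).1) := by
          have : (-w).1 = -w.1 := by simp
          rw [this]; module
        have h2 := norm_add_le (y.1 - w.1) (y.1 - (-w).1)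
        rw [← e, norm_smul, hy, norm_sub_rev, norm_sub_rev y.1] at h2
        norm_num at h2
        simp at hz
        linarith }
  exact this.isCoveringMap

lemma lift_end {m : ℕ} (Γ Γ' : C(unitInterval, S m)) (h : pr m ∘ Γ = pr m ∘ Γ') :
    (Γ 0 = Γ' 0 → Γ 1 = Γ' 1) ∧ (Γ 0 = -Γ' 0 → Γ 1 = -Γ' 1) := by
  have key : ∀ Γ' : C(unitInterval, S m), pr m ∘ Γ = pr m ∘ Γ' → Γ 0 = Γ' 0 → Γ 1 = Γ' 1 := by
    intro Γ' h h0
    let γ : C(unitInterval, RP m) := ⟨pr m ∘ Γ, (pr_cont m).comp Γ.continuous⟩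
    have h1 := ((pr_cov m).eq_liftPath_iff' (γ := γ) (e := Γ 0) rfl).2 ⟨rfl, rfl⟩
    have h2 := ((pr_cov m).eq_liftPath_iff' (γ := γ) (e := Γ 0) (Γ := Γ') rfl).2 ⟨h.symm, h0.symm⟩
    rw [h1.trans h2.symm]
  refine ⟨key Γ' h, fun h0 => ?_⟩
  let Γn : C(unitInterval, S m) := ⟨fun t => -Γ' t, continuous_neg.comp Γ'.continuous⟩
  refine key Γn ?_ h0
  rw [h]
  funext t
  exact (pr_neg m (Γ' t)).symm

/-- Signs from inner products. -/
def sg {m : ℕ} (y z : S m) : ℝ := inner ℝ y.1 z.1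

lemma sg_self {m : ℕ} (y : S m) : sg y y = 1 := by
  have : ‖y.1‖ = 1 := mem_sphere_zero_iff_norm.1 y.2
  simp [sg, this]

lemma sg_neg_left {m : ℕ} (y z : S m) : sg (-y) z = -sg y z := by simp [sg]
lemma sg_neg_right {m : ℕ} (y z : S m) : sg y (-z) = -sg y z := by simp [sg]

lemma sg_mul {m : ℕ} (y z w : S m) (h1 : y = z ∨ y = -z) (h2 : w = z ∨ w = -z) :
    sg y w = sg y z * sg z w := by
  rcases h1 with rfl | rfl <;> rcases h2 with rfl | rfl <;>
    simp [sg_self, sg_neg_left, sg_neg_right]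

lemma sg_sq {m : ℕ} (y z : S m) (h1 : y = z ∨ y = -z) : sg y z ^ 2 = 1 := by
  rcases h1 with rfl | rfl <;> simp [sg_self, sg_neg_left]

lemma planner_sets (n m : ℕ) (hn : 0 < n) (hne : Even n) (U : Set (Fin n → RP m)) (hU : IsOpen U)
    (hinv : ∀ g : Equiv.Perm (Fin n), ∀ x ∈ U, permTuple g x ∈ U)
    (s : C(U, Fin n → C(unitInterval, RP m)))
    (hs0 : ∀ x : U, ∀ j j' : Fin n, s x j 0 = s x j' 0)
    (hs1 : ∀ x : U, ∀ j : Fin n, s x j 1 = (x : Fin n → RP m) j)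
    (hsg : ∀ x : U, ∀ g : Equiv.Perm (Fin n), ∀ hx : permTuple g (x : Fin n → RP m) ∈ U,
        s ⟨permTuple g (x : Fin n → RP m), hx⟩ = permTuple g (s x)) :
    ∃ V : ZMod 2 → Set (Fin n → S m), (∀ a, IsOpen (V a)) ∧
      (∀ x, x ∈ V 0 → x ∉ V 1) ∧
      (∀ a x j, x ∈ V a → Function.update x j (-(x j)) ∈ V (a + 1)) ∧
      (∀ a x (g : Equiv.Perm (Fin n)), x ∈ V a → (fun j => x (g j)) ∈ V a) ∧
      (∀ x, (fun j => pr m (x j)) ∈ U → ∃ a, x ∈ V a) := by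
  classical
  let P : (Fin n → S m) → (Fin n → RP m) := fun x j => pr m (x j)
  have hP : Continuous P := continuous_pi fun j => (pr_cont m).comp (continuous_apply j)
  let A : Set (Fin n → S m) := P ⁻¹' U
  have hA : IsOpen A := hU.preimage hP
  let PA : A → U := fun x => ⟨P x.1, x.2⟩
  have hPA : Continuous PA := (hP.comp continuous_subtype_val).subtype_mk _
  have hlift : ∃ z : A → Fin n → S m, Continuous z ∧ ∀ x j, ∃ Γ : C(unitInterval, S m),
      (∀ t, pr m (Γ t) = s (PA x) j (unitInterval.symm t)) ∧ Γ 0 = x.1 j ∧ Γ 1 = z x j := by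
    let H : Fin n → C(unitInterval × A, RP m) := fun j =>
      ⟨fun ta => s (PA ta.2) j (unitInterval.symm ta.1), by
        have c1 : Continuous fun ta : unitInterval × A => s (PA ta.2) j :=
          (continuous_apply j).comp (s.continuous.comp (hPA.comp continuous_snd))
        have c2 : Continuous fun ta : unitInterval × A => unitInterval.symm ta.1 :=
          unitInterval.continuous_symm.comp continuous_fst
        exact ContinuousEval.continuous_eval.comp (c1.prodMk c2)⟩
    let f : Fin n → C(A, S m) := fun j => ⟨fun x => x.1 j, (continuous_apply j).comp continuous_subtype_val⟩
    have H0 : ∀ j a, H j (0, a) = pr m (f j a) := by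
      intro j a
      simp only [H, f, ContinuousMap.coe_mk, unitInterval.symm_zero, hs1]
      rfl
    let L : Fin n → C(unitInterval × A, S m) := fun j => (pr_cov m).liftHomotopy (H j) (f j) (H0 j)
    refine ⟨fun x j => L j (1, x), ?_, ?_⟩
    · exact continuous_pi fun j => (L j).continuous.comp (by fun_prop)
    · intro x j
      refine ⟨⟨fun t => L j (t, x), (L j).continuous.comp (by fun_prop)⟩, ?_, ?_, rfl⟩
      · intro t
        exact congrFun ((pr_cov m).liftHomotopy_lifts (H j) (f j) (H0 j)) (t, x)
      · exact (pr_cov m).liftHomotopy_zero (H j) (f j) (H0 j) x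
  obtain ⟨z, hz, hzl⟩ := hlift
  have hz0 : ∀ x j j', z x j = z x j' ∨ z x j = -z x j' := by
    intro x j j'
    obtain ⟨Γ, h1, h2, h3⟩ := hzl x j
    obtain ⟨Γ', h1', h2', h3'⟩ := hzl x j'
    rw [← h3, ← h3', ← pr_eq, h1, h1']
    simp only [unitInterval.symm_one]
    exact hs0 _ _ _
  let o : Fin n := ⟨0, hn⟩
  let F : A → ℝ := fun x => ∏ j, sg (z x j) (z x o)
  have hF : Continuous F := by
    refine continuous_finsetProd _ fun j _ => ?_
    have c : ∀ j, Continuous fun x => (z x j).1 := fun j =>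
      continuous_subtype_val.comp ((continuous_apply j).comp hz)
    exact (c j).inner (c o)
  have hFne : ∀ x, F x ≠ 0 := by
    intro x h
    rw [Finset.prod_eq_zero_iff] at h
    obtain ⟨j, _, hj⟩ := h
    have := sg_sq _ _ (hz0 x j o)
    rw [hj] at this
    norm_num at this
  have hFflip : ∀ (x x' : A) j, x'.1 = Function.update x.1 j (-(x.1 j)) → F x' = -F x := by
    intro x x' j hx
    have hPx : PA x' = PA x := by
      apply Subtype.ext
      funext l
      change pr m (x'.1 l) = pr m (x.1 l)
      rw [hx]
      by_cases h : l = j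
      · subst h; simp [pr_neg]
      · simp [h]
    have hz' : ∀ l, z x' l = if l = j then -z x l else z x l := by
      intro l
      obtain ⟨Γ, h1, h2, h3⟩ := hzl x l
      obtain ⟨Γ', h1', h2', h3'⟩ := hzl x' l
      have he := lift_end Γ' Γ (by funext t; simp only [Function.comp, h1, h1', hPx])
      rw [h2, h2', h3, h3', hx] at he
      by_cases h : l = j
      · subst h
        rw [if_pos rfl]
        exact he.2 (by simp)
      · rw [if_neg h]
        exact he.1 (by simp [h])
    have hsg' : ∀ l, sg (z x' l) (z x' o) = 
        (if l = j then -1 else 1) * (if o = j then -1 else 1) * sg (z x l) (z x o) := by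
      intro l
      rw [hz', hz']
      split_ifs <;> simp [sg_neg_left, sg_neg_right]
    simp only [F, hsg', Finset.prod_mul_distrib, Finset.prod_const, Finset.card_univ, Fintype.card_fin,
      Finset.prod_ite_eq', Finset.mem_univ, if_true]
    have : (if o = j then (-1 : ℝ) else 1) ^ n = 1 := by
      split_ifs
      · exact hne.neg_one_pow
      · simp
    rw [this]; simp
  have hFperm : ∀ (x x' : A) (g : Equiv.Perm (Fin n)), x'.1 = (fun j => x.1 (g j)) → F x' = F x := by
    intro x x' g hx
    have hz' : ∀ l, z x' l = z x (g l) := by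
      intro l
      obtain ⟨Γ, h1, h2, h3⟩ := hzl x (g l)
      obtain ⟨Γ', h1', h2', h3'⟩ := hzl x' l
      have hPx : (PA x').1 = permTuple g (PA x).1 := by
        funext l
        change pr m (x'.1 l) = pr m (x.1 (g l))
        rw [hx]
      have hs' : s (PA x') l = s (PA x) (g l) := by
        have h := hsg (PA x) g (hinv g _ (PA x).2)
        have e : PA x' = ⟨permTuple g (PA x).1, hinv g _ (PA x).2⟩ := Subtype.ext hPx
        rw [e, h]
        rfl
      have he := lift_end Γ' Γ (by funext t; simp only [Function.comp, h1, h1', hs'])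
      rw [h2, h2', h3, h3', hx] at he
      exact he.1 rfl
    simp only [F, hz']
    rw [Equiv.prod_comp g (fun l => sg (z x l) (z x (g o)))]
    rw [Finset.prod_congr rfl fun l _ =>
      sg_mul (z x l) (z x o) (z x (g o)) (hz0 x l o) (hz0 x (g o) o)]
    rw [Finset.prod_mul_distrib]
    simp only [Finset.prod_const, Finset.card_univ, Fintype.card_fin]
    obtain ⟨k, hk⟩ := hne
    have : sg (z x o) (z x (g o)) ^ n = 1 := by
      have hp : ∀ c : ℝ, c ^ 2 = 1 → c ^ n = 1 := by
        intro c hc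
        rw [hk, ← two_mul, pow_mul, hc, one_pow]
      exact hp _ (sg_sq _ _ (hz0 x o (g o)))
    rw [this, mul_one]
  refine ⟨fun a => Subtype.val '' {x : A | if a = 0 then 0 < F x else F x < 0}, ?_, ?_, ?_, ?_, ?_⟩
  · intro a
    apply hA.isOpenMap_subtype_val
    split_ifs
    · exact isOpen_lt continuous_const hF
    · exact isOpen_lt hF continuous_const
  · rintro x ⟨y, hy, rfl⟩ ⟨y', hy', h⟩
    obtain rfl := Subtype.ext h
    simp at hy hy'
    linarith
  · rintro a x j ⟨y, hy, rfl⟩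
    have hmem : Function.update y.1 j (-(y.1 j)) ∈ A := by
      have : P (Function.update y.1 j (-(y.1 j))) = P y.1 := by
        funext l
        change pr m _ = pr m _
        by_cases h : l = j
        · subst h; simp [pr_neg]
        · simp [h]
      change P _ ∈ U
      rw [this]
      exact y.2
    refine ⟨⟨_, hmem⟩, ?_, rfl⟩
    have hf := hFflip y ⟨_, hmem⟩ j rfl
    change (if a + 1 = 0 then _ else _)
    rw [hf]
    have ha : a = 0 ∨ a = 1 := by clear hy; revert a; decide
    rcases ha with rfl | rfl
    · simpa using hy
    · simpa [two0] using hy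
  · rintro a x g ⟨y, hy, rfl⟩
    have hmem : (fun j => y.1 (g j)) ∈ A := hinv g _ y.2
    refine ⟨⟨_, hmem⟩, ?_, rfl⟩
    have hf := hFperm y ⟨_, hmem⟩ g rfl
    change (if a = 0 then _ else _)
    rw [hf]
    exact hy
  · intro x hx
    rcases lt_or_gt_of_ne (hFne ⟨x, hx⟩) with h | h
    · exact ⟨1, ⟨x, hx⟩, by simpa using h, rfl⟩
    · exact ⟨0, ⟨x, hx⟩, by simpa using h, rfl⟩

theorem lower (n m e k : ℕ) (hn : 2 ≤ n) (hne : Even n) (he : 1 < e) (hm : m = 2 ^ e)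
    (h : HasSymPlanners (RP m) n k) : n * m + 1 ≤ k := by
  by_contra hk
  obtain ⟨U, hU, hcov, hinv, hs⟩ := h
  choose s hs0 hs1 hsg using hs
  choose V h1 h2 h3 h4 h5 using fun i => planner_sets n m (by omega) hne (U i) (hU i) (hinv i) (s i)
    (hs0 i) (hs1 i) (hsg i)
  refine no_cover n m e k (by omega) he hm (by omega) V h1 h2 h3 h4 fun x => ?_
  have : (fun j => pr m (x j)) ∈ ⋃ i, U i := by rw [hcov]; trivial
  obtain ⟨i, hi⟩ := Set.mem_iUnion.1 this
  exact ⟨i, h5 i x hi⟩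

end
end TCP

namespace TCP
noncomputable section
open Polynomial

lemma pr_open (m : ℕ) : IsOpenQuotientMap (pr m) :=
  ⟨(pr_quot m).surjective, pr_cont m, (pr_cov m).isOpenMap⟩

/-- The normalization of a vector; a fixed unit vector if it vanishes. -/
def nrm (m : ℕ) (v : EuclideanSpace ℝ (Fin (m + 1))) : S m :=
  if h : v = 0 then ⟨EuclideanSpace.single 0 1, by simp⟩
  else ⟨‖v‖⁻¹ • v, by
    rw [mem_sphere_zero_iff_norm, norm_smul, norm_inv, norm_norm,
      inv_mul_cancel₀ (norm_ne_zero_iff.2 h)]⟩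

lemma nrm_val (m : ℕ) {v : EuclideanSpace ℝ (Fin (m + 1))} (h : v ≠ 0) :
    (nrm m v).1 = ‖v‖⁻¹ • v := by
  rw [nrm, dif_neg h]

lemma nrm_contAt (m : ℕ) {v : EuclideanSpace ℝ (Fin (m + 1))} (h : v ≠ 0) :
    ContinuousAt (nrm m) v := by
  rw [Topology.IsInducing.subtypeVal.continuousAt_iff]
  have h1 : ContinuousAt (fun v : EuclideanSpace ℝ (Fin (m + 1)) => ‖v‖⁻¹ • v) v :=
    (continuous_norm.continuousAt.inv₀ (norm_ne_zero_iff.2 h)).smul continuousAt_id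
  refine h1.congr ?_
  filter_upwards [isOpen_ne.mem_nhds h] with w hw
  exact (nrm_val m hw).symm

/-- The straight segment from `a` to a multiple of `y`. -/
def seg {m : ℕ} (a : EuclideanSpace ℝ (Fin (m + 1))) (p : S m × unitInterval) :
    EuclideanSpace ℝ (Fin (m + 1)) :=
  (1 - (p.2 : ℝ)) • a + ((p.2 : ℝ) * inner ℝ a p.1.1) • p.1.1

lemma seg_cont {m : ℕ} (a : EuclideanSpace ℝ (Fin (m + 1))) : Continuous (seg a) := by
  unfold seg
  fun_prop

lemma seg_ne {m : ℕ} (a : EuclideanSpace ℝ (Fin (m + 1))) (y : S m) (t : unitInterval)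
    (h : inner ℝ a y.1 ≠ 0) : seg a (y, t) ≠ 0 := by
  intro h0
  have ha : a ≠ 0 := by rintro rfl; simp at h
  have h1 : inner ℝ a (seg a (y, t)) = 0 := by rw [h0, inner_zero_right]
  simp only [seg, inner_add_right, inner_smul_right] at h1
  have h2 : 0 < inner ℝ a a := real_inner_self_pos.2 ha
  have h3 : 0 < inner ℝ a y.1 * inner ℝ a y.1 := mul_self_pos.2 h
  have h4 := t.2.1
  have h5 := t.2.2
  rcases eq_or_lt_of_le h4 with h6 | h6
  · rw [← h6] at h1
    simp at h1
    exact ha h1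
  · nlinarith [mul_pos h6 h3, mul_nonneg (sub_nonneg.2 h5) h2.le]

/-- The motion in projective space. -/
def mot {m : ℕ} (a : EuclideanSpace ℝ (Fin (m + 1))) (p : RP m × unitInterval) : RP m :=
  Quotient.lift (s := antipodalSetoid m) (fun y : S m => pr m (nrm m (seg a (y, p.2)))) (by
    rintro y z (h | h)
    · rw [Subtype.ext h]
    · simp only [seg, h, inner_neg_right, mul_neg, neg_smul, smul_neg, neg_neg]) p.1

lemma mot_pr {m : ℕ} (a : EuclideanSpace ℝ (Fin (m + 1))) (y : S m) (t : unitInterval) :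
    mot a (pr m y, t) = pr m (nrm m (seg a (y, t))) := rfl

lemma mot_contAt {m : ℕ} (a : EuclideanSpace ℝ (Fin (m + 1))) (y : S m) (t : unitInterval)
    (h : inner ℝ a y.1 ≠ 0) : ContinuousAt (mot a) (pr m y, t) := by
  have hq : IsOpenQuotientMap (Prod.map (pr m) (id : unitInterval → unitInterval)) :=
    (pr_open m).prodMap .id
  have := hq.continuousAt_comp_iff (g := mot a) (x := (y, t))
  refine this.1 ?_
  change ContinuousAt (fun p : S m × unitInterval => pr m (nrm m (seg a p))) (y, t)
  exact (pr_cont m).continuousAt.comp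
    (ContinuousAt.comp (nrm_contAt m (seg_ne a y t h)) (seg_cont a).continuousAt)

lemma nrm_smul (m : ℕ) (c : ℝ) (y : S m) (h : c ≠ 0) : pr m (nrm m (c • y.1)) = pr m y := by
  have hy : ‖y.1‖ = 1 := mem_sphere_zero_iff_norm.1 y.2
  have hy0 : y.1 ≠ 0 := by rw [← norm_ne_zero_iff, hy]; exact one_ne_zero
  have hv := nrm_val m (smul_ne_zero h hy0)
  rw [norm_smul, hy, mul_one, smul_smul] at hv
  rw [pr_eq]
  rcases lt_or_gt_of_ne h with h1 | h1
  · right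
    apply Subtype.ext
    rw [hv, Real.norm_eq_abs, abs_of_neg h1, inv_neg, neg_mul, inv_mul_cancel₀ h]
    simp
  · left
    apply Subtype.ext
    rw [hv, Real.norm_eq_abs, abs_of_pos h1, inv_mul_cancel₀ h, one_smul]

lemma mot_one {m : ℕ} (a : EuclideanSpace ℝ (Fin (m + 1))) (y : S m)
    (h : inner ℝ a y.1 ≠ 0) : mot a (pr m y, 1) = pr m y := by
  rw [mot_pr, ← nrm_smul m _ y h]
  simp [seg]

lemma mot_zero {m : ℕ} (a : EuclideanSpace ℝ (Fin (m + 1))) (y : S m) :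
    mot a (pr m y, 0) = pr m (nrm m a) := by
  rw [mot_pr]
  simp [seg]

/-- The points of projective space not orthogonal to `a`. -/
def WW {m : ℕ} (a : EuclideanSpace ℝ (Fin (m + 1))) : Set (RP m) :=
  pr m '' {y | inner ℝ a y.1 ≠ 0}

lemma WW_open {m : ℕ} (a : EuclideanSpace ℝ (Fin (m + 1))) : IsOpen (WW a) := by
  apply (pr_open m).isOpenMap
  exact isOpen_ne_fun (by fun_prop) continuous_const

/-- Points on the moment curve. -/
def mom (m : ℕ) (i : ℕ) : EuclideanSpace ℝ (Fin (m + 1)) :=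
  WithLp.toLp 2 fun l => (i : ℝ) ^ (l : ℕ)

lemma mom_card (m N : ℕ) (y : S m) :
    ((Finset.range N).filter fun i => inner ℝ (mom m i) y.1 = 0).card ≤ m := by
  classical
  let p : ℝ[X] := ∑ l : Fin (m + 1), C (y.1 l) * X ^ (l : ℕ)
  have hev : ∀ i : ℕ, p.eval (i : ℝ) = inner ℝ (mom m i) y.1 := by
    intro i
    simp [p, mom, eval_finsetSum, PiLp.inner_apply]
  have hco : ∀ l : Fin (m + 1), p.coeff l = y.1 l := by
    intro l
    simp [p, coeff_X_pow, Fin.val_inj]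
  have hp : p ≠ 0 := by
    intro h0
    have : y.1 = 0 := by
      ext l
      rw [← hco l, h0]; simp
    have hy : ‖y.1‖ = 1 := mem_sphere_zero_iff_norm.1 y.2
    rw [this] at hy
    simp at hy
  have hd : p.natDegree ≤ m := by
    apply natDegree_sum_le_of_forall_le
    intro l _
    exact (natDegree_C_mul_X_pow_le _ _).trans (by omega)
  rw [← Finset.card_image_of_injective _ (Nat.cast_injective (R := ℝ))]
  refine le_trans (Finset.card_le_card ?_) ((Multiset.toFinset_card_le p.roots).trans
    ((card_roots' p).trans hd))
  intro t ht
  obtain ⟨i, hi, rfl⟩ := Finset.mem_image.1 ht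
  rw [Multiset.mem_toFinset, mem_roots hp, IsRoot, hev]
  exact (Finset.mem_filter.1 hi).2

theorem upper (n m : ℕ) : HasSymPlanners (RP m) n (n * m + 1) := by
  classical
  refine ⟨fun i => {x | ∀ j, x j ∈ WW (mom m i)}, ?_, ?_, ?_, ?_⟩
  · intro i
    have : {x : Fin n → RP m | ∀ j, x j ∈ WW (mom m i)} =
        ⋂ j, (fun x : Fin n → RP m => x j) ⁻¹' (WW (mom m i)) := by
      ext x; simp
    beta_reduce
    rw [this]
    exact isOpen_iInter_of_finite fun j => (WW_open _).preimage (continuous_apply j)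
  · apply Set.eq_univ_of_forall
    intro x
    choose y hy using fun j => (pr_quot m).surjective (x j)
    let B : Fin n → Finset ℕ := fun j =>
      (Finset.range (n * m + 1)).filter fun i => inner ℝ (mom m i) (y j).1 = 0
    have hB : (Finset.univ.biUnion B).card ≤ n * m := by
      refine (Finset.card_biUnion_le_card_mul _ _ m fun j _ => mom_card m _ (y j)).trans ?_
      simp
    obtain ⟨i, hi, hiB⟩ := Finset.exists_mem_notMem_of_card_lt_card
      (s := Finset.univ.biUnion B) (t := Finset.range (n * m + 1)) (by
        rw [Finset.card_range]; omega)
    rw [Set.mem_iUnion]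
    refine ⟨⟨i, Finset.mem_range.1 hi⟩, fun j => ⟨y j, fun h0 => hiB ?_, hy j⟩⟩
    exact Finset.mem_biUnion.2 ⟨j, Finset.mem_univ _, Finset.mem_filter.2 ⟨hi, h0⟩⟩
  · intro i g x hx j
    exact hx (g j)
  · intro i
    have hc : ∀ j : Fin n, Continuous fun p :
        {x : Fin n → RP m | ∀ j, x j ∈ WW (mom m i)} × unitInterval =>
          mot (mom m i) (p.1.1 j, p.2) := by
      intro j
      rw [continuous_iff_continuousAt]
      rintro ⟨x, t⟩
      obtain ⟨y, hy, hyx⟩ := x.2 j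
      have h1 := mot_contAt (mom m i) y t hy
      rw [hyx] at h1
      refine ContinuousAt.comp (x := (x, t)) (g := mot (mom m i)) (f := fun p :
        {x : Fin n → RP m | ∀ j, x j ∈ WW (mom m i)} × unitInterval => (p.1.1 j, p.2)) h1 ?_
      exact (((continuous_apply j).comp (continuous_subtype_val.comp continuous_fst)).prodMk
        continuous_snd).continuousAt
    refine ⟨⟨fun x j => ContinuousMap.curry ⟨_, hc j⟩ x,
      continuous_pi fun j => ContinuousMap.continuous _⟩, ?_, ?_, ?_⟩
    · intro x j j'
      obtain ⟨y, hy, hyx⟩ := x.2 j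
      obtain ⟨y', hy', hyx'⟩ := x.2 j'
      change mot (mom m i) (x.1 j, 0) = mot (mom m i) (x.1 j', 0)
      rw [← hyx, ← hyx', mot_zero, mot_zero]
    · intro x j
      obtain ⟨y, hy, hyx⟩ := x.2 j
      change mot (mom m i) (x.1 j, 1) = x.1 j
      rw [← hyx, mot_one _ _ hy]
    · intro x g hx
      rfl

end
end TCP

/-- For every even `n ≥ 2` and every `m = 2^e` with `e > 1`,
`TC^Σ_n(ℝP^m) = nm + 1`. -/
theorem TCsym_projective_space (n m e : ℕ) (hn : 2 ≤ n) (hne : Even n)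
    (he : 1 < e) (hm : m = 2 ^ e) :
    TCsym (RP m) n = ((n * m + 1 : ℕ) : ℕ∞) := by
  unfold TCsym
  apply le_antisymm
  · exact sInf_le ⟨n * m + 1, rfl, TCP.upper n m⟩
  · apply le_sInf
    rintro _ ⟨k, rfl, h⟩
    exact_mod_cast TCP.lower n m e k hn hne he hm h
end
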